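/- arXiv:1104.3218 — 13 statements merged into one kernel-verified Lean document; each statement's English description precedes it below -/
import Mathlib

section
/- For every x in the open interval (−1,1), the limit as ε → 0⁺ of 2∫_{−1}^{1} (x−t)·(2/π)·√(1−t²)/((x−t)²+ε²) dt exists and equals 4x. (This is the reducer of the Chebyshev measure of the second kind of density ρ(x)=(2/π)√(1−x²) on [−1,1].) -/
open MeasureTheory Filter Set

/-!
Put `z = x + iε` and `ρ(t) = (2/π)√(1 - t²)`. The integral is the real part of the Cauchy transform
of `ρ` at `z`. Writing `2z = w + w⁻¹` with `‖w‖ < 1`, the substitution `t = cos θ` turns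
`∫ √(1 - t²) / (z - t) dt` into a mean value over the unit circle of `(1 - u²) / (1 - wu)`, which
is holomorphic in `u` on the disc; the result is `π w`. Finally `(w - z)² = z² - 1` tends to
`x² - 1 ≤ 0`, so `w - z` becomes purely imaginary in the limit and `re w → x`.
-/

open scoped Real Topology ComplexConjugate

section IntegralTransformations

variable {E : Type*} [NormedAddCommGroup E] [NormedSpace ℝ E]

lemma integral_sqrt_one_sub_sq_smul (f : ℝ → E) :
    ∫ t in (-1)..1, √(1 - t ^ 2) • f t = ∫ θ in 0..π, Real.sin θ ^ 2 • f (Real.cos θ) := by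
  rw [intervalIntegral.integral_of_le (by norm_num), intervalIntegral.integral_of_le Real.pi_pos.le,
    ← integral_Icc_eq_integral_Ioc, ← integral_Icc_eq_integral_Ioc, ← Real.bijOn_cos.image_eq,
    integral_image_eq_integral_abs_deriv_smul measurableSet_Icc
      (fun θ _ ↦ (Real.hasDerivAt_cos θ).hasDerivWithinAt) Real.injOn_cos]
  refine setIntegral_congr_fun measurableSet_Icc fun θ hθ ↦ ?_
  have hsin : 0 ≤ Real.sin θ := Real.sin_nonneg_of_mem_Icc hθ
  simp only [abs_neg, abs_of_nonneg hsin, ← Real.sin_sq, Real.sqrt_sq hsin, smul_smul, ← sq]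

lemma integral_circleMap_add_circleMap_neg {f : ℂ → E} {c : ℂ} {R : ℝ}
    (hf : CircleIntegrable f c R) :
    ∫ θ in 0..π, (f (circleMap c R θ) + f (circleMap c R (-θ))) =
      (2 * π) • Real.circleAverage f c R := by
  have hper : Function.Periodic (fun θ ↦ f (circleMap c R θ)) (2 * π) :=
    (periodic_circleMap c R).comp f
  have hint (a b : ℝ) : IntervalIntegrable (fun θ ↦ f (circleMap c R θ)) volume a b :=
    hper.intervalIntegrable₀ Real.two_pi_pos.ne' hf a b
  have hint_neg : IntervalIntegrable (fun θ ↦ f (circleMap c R (-θ))) volume 0 π := by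
    simpa using (IntervalIntegrable.iff_comp_neg (by simp)).mp (hint 0 (-π))
  rw [intervalIntegral.integral_add (hint 0 π) hint_neg,
    intervalIntegral.integral_comp_neg (fun θ ↦ f (circleMap c R θ)), neg_zero, add_comm,
    intervalIntegral.integral_add_adjacent_intervals (hint _ _) (hint _ _), Real.circleAverage_def,
    smul_inv_smul₀ Real.two_pi_pos.ne']
  simpa [two_mul] using hper.intervalIntegral_add_eq (-π) 0

end IntegralTransformations

lemma one_sub_mul_ne_zero_of_norm_lt_one {w u : ℂ} (hw : ‖w‖ < 1) (hu : ‖u‖ ≤ 1) :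
    1 - w * u ≠ 0 := by
  refine sub_ne_zero.mpr fun h ↦ ?_
  have : ‖w * u‖ < 1 := by
    rw [norm_mul]
    exact mul_lt_one_of_nonneg_of_lt_one_left (norm_nonneg w) hw hu
  simp [← h] at this

lemma sin_sq_div_eq_circleMap {w : ℂ} (hw : ‖w‖ < 1) (θ : ℝ) :
    (Real.sin θ : ℂ) ^ 2 / (1 - 2 * w * Real.cos θ + w ^ 2) =
      4⁻¹ * ((1 - circleMap 0 1 θ ^ 2) / (1 - w * circleMap 0 1 θ) +
        (1 - circleMap 0 1 (-θ) ^ 2) / (1 - w * circleMap 0 1 (-θ))) := by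
  have hu := one_sub_mul_ne_zero_of_norm_lt_one hw (u := circleMap 0 1 θ) (by simp)
  have hv := one_sub_mul_ne_zero_of_norm_lt_one hw (u := circleMap 0 1 (-θ)) (by simp)
  have huv : circleMap 0 1 θ * circleMap 0 1 (-θ) = 1 := by
    simp [circleMap, ← Complex.exp_add]
  have hcos : (Real.cos θ : ℂ) = (circleMap 0 1 θ + circleMap 0 1 (-θ)) / 2 := by
    simp [circleMap, Complex.cos]
  have hsin : (Real.sin θ : ℂ) = (circleMap 0 1 (-θ) - circleMap 0 1 θ) * Complex.I / 2 := by
    simp [circleMap, Complex.sin]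
  generalize circleMap 0 1 θ = u at *
  generalize circleMap 0 1 (-θ) = v at *
  have hden : 1 - 2 * w * Real.cos θ + w ^ 2 = (1 - w * u) * (1 - w * v) := by
    rw [hcos]
    linear_combination -w ^ 2 * huv
  rw [hden, hsin, div_add_div _ _ hu hv, ← mul_div_assoc]
  congr 1
  linear_combination (v - u) ^ 2 / 4 * Complex.I_sq + (2 - w * (u + v)) / 4 * huv

lemma integral_sin_sq_div_one_sub_two_mul_cos_add_sq {w : ℂ} (hw : ‖w‖ < 1) :
    ∫ θ in 0..π, (Real.sin θ : ℂ) ^ 2 / (1 - 2 * w * Real.cos θ + w ^ 2) = (π / 2 : ℂ) := by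
  have hdiff : DifferentiableOn ℂ (fun u ↦ (1 - u ^ 2) / (1 - w * u)) (Metric.closedBall 0 1) :=
    DifferentiableOn.div (by fun_prop) (by fun_prop) fun u hu ↦
      one_sub_mul_ne_zero_of_norm_lt_one hw (by simpa using hu)
  have hmean : Real.circleAverage (fun u : ℂ ↦ (1 - u ^ 2) / (1 - w * u)) 0 1 = 1 := by
    rw [DiffContOnCl.circleAverage (by simpa using hdiff.diffContOnCl_ball subset_rfl)]
    simp
  have hint : CircleIntegrable (fun u ↦ (1 - u ^ 2) / (1 - w * u)) 0 1 :=
    (hdiff.continuousOn.mono Metric.sphere_subset_closedBall).circleIntegrable zero_le_one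
  simp only [sin_sq_div_eq_circleMap hw]
  rw [intervalIntegral.integral_const_mul, integral_circleMap_add_circleMap_neg hint, hmean,
    Complex.real_smul]
  push_cast
  ring

lemma integral_sqrt_one_sub_sq_div_sub {z w : ℂ} (hw : ‖w‖ < 1) (hzw : w ^ 2 + 1 = 2 * z * w) :
    ∫ t in (-1 : ℝ)..1, (√(1 - t ^ 2) : ℂ) / (z - t) = π * w := by
  have hw0 : w ≠ 0 := by
    rintro rfl
    simp at hzw
  have hkernel (θ : ℝ) : Real.sin θ ^ 2 • (z - Real.cos θ)⁻¹ =
      2 * w * ((Real.sin θ : ℂ) ^ 2 / (1 - 2 * w * Real.cos θ + w ^ 2)) := by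
    rw [show 1 - 2 * w * Real.cos θ + w ^ 2 = 2 * w * (z - Real.cos θ) by linear_combination hzw,
      ← mul_div_assoc, mul_div_mul_left _ _ (mul_ne_zero two_ne_zero hw0), Complex.real_smul,
      Complex.ofReal_pow, div_eq_mul_inv]
  calc ∫ t in (-1 : ℝ)..1, (√(1 - t ^ 2) : ℂ) / (z - t)
    _ = ∫ t in (-1 : ℝ)..1, √(1 - t ^ 2) • (z - t)⁻¹ := by
      simp only [Complex.real_smul, div_eq_mul_inv]
    _ = ∫ θ in 0..π, Real.sin θ ^ 2 • (z - Real.cos θ)⁻¹ :=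
      integral_sqrt_one_sub_sq_smul fun t ↦ (z - t)⁻¹
    _ = 2 * w * (π / 2) := by
      simp only [hkernel]
      rw [intervalIntegral.integral_const_mul, integral_sin_sq_div_one_sub_two_mul_cos_add_sq hw]
    _ = π * w := by ring

lemma exists_norm_lt_one_sq_add_one_eq {z : ℂ} (hz : ∀ t ∈ Icc (-1 : ℝ) 1, z ≠ t) :
    ∃ w : ℂ, ‖w‖ < 1 ∧ w ^ 2 + 1 = 2 * z * w := by
  obtain ⟨s, hs⟩ := IsAlgClosed.exists_eq_mul_self (z ^ 2 - 1)
  have hprod : (z - s) * (z + s) = 1 := by linear_combination hs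
  have hnorm : ‖z - s‖ * ‖z + s‖ = 1 := by rw [← norm_mul, hprod, norm_one]
  rcases lt_trichotomy ‖z - s‖ 1 with hlt | heq | hgt
  · exact ⟨z - s, hlt, by linear_combination -hs⟩
  · -- On the unit circle the other root `z + s` is `conj (z - s)`, so their mean `z` is real.
    have hconj : z + s = conj (z - s) := by
      rw [← Complex.inv_eq_conj heq]
      exact eq_inv_of_mul_eq_one_right hprod
    have hre : z = ((z - s).re : ℂ) := by
      rw [Complex.re_eq_add_conj, ← hconj]
      ring
    exact absurd hre (hz _ (abs_le.mp (heq ▸ Complex.abs_re_le_norm (z - s))))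
  · exact ⟨z + s, by nlinarith, by linear_combination -hs⟩

lemma abs_re_eq_sqrt_half_norm_sq_add_re_sq (s : ℂ) : |s.re| = √((‖s ^ 2‖ + (s ^ 2).re) / 2) := by
  rw [← Real.sqrt_sq_eq_abs, norm_pow, Complex.sq_norm, Complex.normSq_apply, sq s, Complex.mul_re]
  congr 1
  ring

lemma tendsto_re_of_sq_add_one_eq {ι : Type*} {l : Filter ι} {z w : ι → ℂ} {x : ℝ}
    (hx : x ∈ Icc (-1 : ℝ) 1) (hz : Tendsto z l (𝓝 x))
    (hzw : ∀ᶠ i in l, w i ^ 2 + 1 = 2 * z i * w i) :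
    Tendsto (fun i ↦ (w i).re) l (𝓝 x) := by
  have hdisc : Tendsto (fun i ↦ (w i - z i) ^ 2) l (𝓝 ((x ^ 2 - 1 : ℝ) : ℂ)) := by
    push_cast
    refine ((hz.pow 2).sub_const 1).congr' ?_
    filter_upwards [hzw] with i hi
    linear_combination -hi
  have hlim : √((‖((x ^ 2 - 1 : ℝ) : ℂ)‖ + ((x ^ 2 - 1 : ℝ) : ℂ).re) / 2) = 0 := by
    rw [Complex.norm_real, Complex.ofReal_re, Real.norm_of_nonpos (by nlinarith [hx.1, hx.2])]
    simp
  have hre : Tendsto (fun i ↦ (w i - z i).re) l (𝓝 0) := by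
    rw [tendsto_zero_iff_abs_tendsto_zero, ← hlim]
    simp only [Function.comp_def, abs_re_eq_sqrt_half_norm_sq_add_re_sq]
    exact ((hdisc.norm.add ((Complex.continuous_re.tendsto _).comp hdisc)).div_const 2).sqrt
  simpa using hre.add ((Complex.continuous_re.tendsto _).comp hz)

lemma add_mul_I_sub_ne_zero (x : ℝ) {ε : ℝ} (hε : ε ≠ 0) (t : ℝ) :
    (x + ε * Complex.I - t : ℂ) ≠ 0 := fun h ↦ hε (by simpa using congrArg Complex.im h)

lemma integral_sub_mul_div_sq_add_sq {ρ : ℝ → ℝ} {a b : ℝ} (hρ : IntervalIntegrable ρ volume a b)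
    (x : ℝ) {ε : ℝ} (hε : ε ≠ 0) :
    ∫ t in a..b, (x - t) * ρ t / ((x - t) ^ 2 + ε ^ 2) =
      (∫ t in a..b, (ρ t : ℂ) / (x + ε * Complex.I - t)).re := by
  have hint : IntervalIntegrable (fun t ↦ (ρ t : ℂ) / (x + ε * Complex.I - t)) volume a b := by
    simp only [div_eq_mul_inv]
    exact IntervalIntegrable.mul_continuousOn ⟨hρ.1.ofReal, hρ.2.ofReal⟩
      (Continuous.inv₀ (by fun_prop) (add_mul_I_sub_ne_zero x hε)).continuousOn
  have hre := Complex.reCLM.intervalIntegral_comp_comm hint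
  simp only [Complex.reCLM_apply] at hre
  rw [← hre]
  congr! 2 with t
  have hcoords : (x + ε * Complex.I - t : ℂ) = ⟨x - t, ε⟩ := by apply Complex.ext <;> simp
  rw [hcoords, Complex.div_re, Complex.normSq_mk, Complex.ofReal_re, Complex.ofReal_im]
  ring

lemma two_mul_integral_semicircle_eq_four_mul_re {x ε : ℝ} (hε : ε ≠ 0) {w : ℂ} (hw : ‖w‖ < 1)
    (hzw : w ^ 2 + 1 = 2 * (x + ε * Complex.I) * w) :
    2 * ∫ t in (-1)..1, (x - t) * ((2 / π) * √(1 - t ^ 2)) / ((x - t) ^ 2 + ε ^ 2) =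
      4 * w.re := by
  have hcauchy : ∫ t in (-1 : ℝ)..1, (((2 / π) * √(1 - t ^ 2) : ℝ) : ℂ) / (x + ε * Complex.I - t) =
      2 * w := by
    simp only [Complex.ofReal_mul, mul_div_assoc]
    rw [intervalIntegral.integral_const_mul, integral_sqrt_one_sub_sq_div_sub hw hzw]
    push_cast
    field_simp
  rw [integral_sub_mul_div_sq_add_sq (Continuous.intervalIntegrable (by fun_prop) _ _) x hε,
    hcauchy, ← Complex.ofReal_ofNat, Complex.re_ofReal_mul]
  ring

theorem reducer_chebyshev_second_kind_general (x : ℝ) (hx : x ∈ Icc (-1 : ℝ) 1) :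
    Tendsto
      (fun ε : ℝ ↦ 2 * ∫ t in (-1)..1, (x - t) * ((2 / π) * √(1 - t ^ 2)) / ((x - t) ^ 2 + ε ^ 2))
      (𝓝[>] 0) (𝓝 (4 * x)) := by
  choose! w hw hzw using fun (ε : ℝ) (hε : ε ≠ 0) ↦
    exists_norm_lt_one_sq_add_one_eq fun t _ ↦ sub_ne_zero.mp (add_mul_I_sub_ne_zero x hε t)
  have hne : ∀ᶠ ε : ℝ in 𝓝[>] 0, ε ≠ 0 := eventually_mem_nhdsWithin.mono fun ε hε ↦ hε.ne'
  have hz : Tendsto (fun ε : ℝ ↦ (x + ε * Complex.I : ℂ)) (𝓝[>] 0) (𝓝 x) :=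
    (Continuous.tendsto' (by fun_prop) _ _ (by simp)).mono_left nhdsWithin_le_nhds
  refine ((tendsto_re_of_sq_add_one_eq hx hz (hne.mono hzw)).const_mul 4).congr' ?_
  filter_upwards [hne] with ε hε
  exact (two_mul_integral_semicircle_eq_four_mul_re hε (hw ε hε) (hzw ε hε)).symm

/-- The reducer of the Chebyshev measure of the second kind of density
`ρ(x) = (2/π)√(1−x²)` on `[−1,1]`: for every `x ∈ (−1,1)`,
`lim_{ε→0⁺} 2∫_{−1}^{1} (x−t)·(2/π)√(1−t²)/((x−t)²+ε²) dt = 4x`. -/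
theorem reducer_chebyshev_second_kind (x : ℝ) (hx : x ∈ Ioo (-1 : ℝ) 1) :
    Tendsto
      (fun ε : ℝ =>
        2 * ∫ t in (-1 : ℝ)..1,
          (x - t) * ((2 / Real.pi) * Real.sqrt (1 - t ^ 2)) / ((x - t) ^ 2 + ε ^ 2))
      (nhdsWithin 0 (Ioi 0)) (nhds (4 * x)) :=
  reducer_chebyshev_second_kind_general x (Ioo_subset_Icc_self hx)
end

section
/- Let ρ : [0,1] → ℝ be a nonnegative function satisfying a Lipschitz condition on [0,1]. Then for every x in the open interval (0,1), the limit as ε → 0⁺ of 2∫₀¹ (x−t)ρ(t)/((x−t)²+ε²) dt exists and equals 2·ρ(x)·ln(x/(1−x)) − 2∫₀¹ (ρ(t)−ρ(x))/(t−x) dt. -/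
open MeasureTheory Filter Set

/-!
Write `ρ t = ρ x + (t - x) * slope ρ x t`. The constant part of `ρ` is integrated against the kernel
`s / (s ^ 2 + ε ^ 2)`, where `s = x - t`, by means of the primitive `log (s ^ 2 + ε ^ 2) / 2`, and
yields the logarithm as `ε → 0`. In the remaining part the kernel is multiplied by `s`, and
`s ^ 2 / (s ^ 2 + ε ^ 2)` is bounded by `1` and tends to `1` off `s = 0`, so dominated convergence
applies as soon as the slope is integrable.
-/

section Reducer

open scoped Topology

/-- The conjugate Poisson kernel of the upper half-plane at height `ε`, without its customary factor
`1 / π`. It is the regularization of `1 / s` in the definition of the reducer. -/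
noncomputable def conjPoissonKernel (ε s : ℝ) : ℝ :=
  s / (s ^ 2 + ε ^ 2)

theorem mul_conjPoissonKernel (ε s : ℝ) :
    s * conjPoissonKernel ε s = s ^ 2 / (s ^ 2 + ε ^ 2) := by
  rw [conjPoissonKernel, mul_div_assoc', sq s]

theorem norm_mul_conjPoissonKernel_le_one (ε s : ℝ) : ‖s * conjPoissonKernel ε s‖ ≤ 1 := by
  rw [mul_conjPoissonKernel, Real.norm_of_nonneg (by positivity)]
  exact div_le_one_of_le₀ (le_add_of_nonneg_right (sq_nonneg ε)) (by positivity)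

theorem tendsto_mul_conjPoissonKernel {s : ℝ} (hs : s ≠ 0) :
    Tendsto (fun ε => s * conjPoissonKernel ε s) (𝓝 0) (𝓝 1) := by
  have hcont : ContinuousAt (fun ε : ℝ => s ^ 2 / (s ^ 2 + ε ^ 2)) 0 :=
    ContinuousAt.div (by fun_prop) (by fun_prop) (by positivity)
  simpa [mul_conjPoissonKernel, hs] using hcont.tendsto

theorem measurable_conjPoissonKernel (ε : ℝ) : Measurable (conjPoissonKernel ε) := by
  unfold conjPoissonKernel
  fun_prop

theorem continuous_conjPoissonKernel {ε : ℝ} (hε : ε ≠ 0) : Continuous (conjPoissonKernel ε) :=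
  Continuous.div (by fun_prop) (by fun_prop) fun s => by positivity

theorem hasDerivAt_log_sq_add_sq {ε : ℝ} (hε : ε ≠ 0) (s : ℝ) :
    HasDerivAt (fun u => Real.log (u ^ 2 + ε ^ 2) / 2) (conjPoissonKernel ε s) s := by
  have hsq : HasDerivAt (fun u => u ^ 2 + ε ^ 2) (2 * s) s := by
    simpa using (hasDerivAt_pow 2 s).add_const (ε ^ 2)
  refine ((hsq.log (by positivity)).div_const 2).congr_deriv ?_
  rw [conjPoissonKernel]
  ring

theorem integral_conjPoissonKernel {ε : ℝ} (hε : ε ≠ 0) (a b : ℝ) :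
    ∫ s in a..b, conjPoissonKernel ε s =
      Real.log (b ^ 2 + ε ^ 2) / 2 - Real.log (a ^ 2 + ε ^ 2) / 2 :=
  intervalIntegral.integral_eq_sub_of_hasDerivAt (fun s _ => hasDerivAt_log_sq_add_sq hε s)
    ((continuous_conjPoissonKernel hε).intervalIntegrable a b)

-- If `a` and `b` have opposite signs, this limit is the principal value of the integral of `1 / s`.
theorem tendsto_integral_conjPoissonKernel {a b : ℝ} (ha : a ≠ 0) (hb : b ≠ 0) :
    Tendsto (fun ε => ∫ s in a..b, conjPoissonKernel ε s) (𝓝[≠] 0) (𝓝 (Real.log |b / a|)) := by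
  have hlog {c : ℝ} (hc : c ≠ 0) :
      Tendsto (fun ε : ℝ => Real.log (c ^ 2 + ε ^ 2) / 2) (𝓝 0) (𝓝 (Real.log c)) := by
    have hcont : ContinuousAt (fun ε : ℝ => Real.log (c ^ 2 + ε ^ 2) / 2) 0 :=
      (ContinuousAt.log (by fun_prop) (by positivity)).div_const 2
    simpa using hcont.tendsto
  rw [Real.log_abs, Real.log_div hb ha]
  refine (((hlog hb).sub (hlog ha)).mono_left nhdsWithin_le_nhds).congr' ?_
  filter_upwards [self_mem_nhdsWithin] with ε hε
  exact (integral_conjPoissonKernel hε a b).symm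

theorem norm_slope_le_of_lipschitzOnWith {𝕜 E : Type*} [NormedField 𝕜] [NormedAddCommGroup E]
    [NormedSpace 𝕜 E] {f : 𝕜 → E} {K : NNReal} {s : Set 𝕜} (hf : LipschitzOnWith K f s)
    {u v : 𝕜} (hu : u ∈ s) (hv : v ∈ s) : ‖slope f u v‖ ≤ K := by
  rw [slope_def_module, norm_smul, norm_inv, inv_mul_eq_div]
  exact div_le_of_le_mul₀ (norm_nonneg _) K.coe_nonneg (hf.norm_sub_le hv hu)

section NormedSpace

variable {E : Type*} [NormedAddCommGroup E] [NormedSpace ℝ E] {f : ℝ → E} {a b x : ℝ}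

theorem norm_mul_conjPoissonKernel_smul_le (ε s : ℝ) (v : E) :
    ‖(s * conjPoissonKernel ε s) • v‖ ≤ ‖v‖ := by
  rw [norm_smul]
  exact mul_le_of_le_one_left (norm_nonneg v) (norm_mul_conjPoissonKernel_le_one ε s)

theorem intervalIntegrable_mul_conjPoissonKernel_smul
    (hf : IntervalIntegrable f volume a b) (ε x : ℝ) :
    IntervalIntegrable (fun t => ((x - t) * conjPoissonKernel ε (x - t)) • f t) volume a b := by
  have hmeas : Measurable fun t => (x - t) * conjPoissonKernel ε (x - t) := by
    have := measurable_conjPoissonKernel ε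
    fun_prop
  exact hf.mono_fun (hmeas.aestronglyMeasurable.smul hf.def'.aestronglyMeasurable)
    (Eventually.of_forall fun t => norm_mul_conjPoissonKernel_smul_le ε (x - t) (f t))

theorem tendsto_integral_mul_conjPoissonKernel_smul
    (hf : IntervalIntegrable f volume a b) (x : ℝ) :
    Tendsto (fun ε => ∫ t in a..b, ((x - t) * conjPoissonKernel ε (x - t)) • f t) (𝓝 0)
      (𝓝 (∫ t in a..b, f t)) := by
  refine intervalIntegral.tendsto_integral_filter_of_dominated_convergence (fun t => ‖f t‖)
    (Eventually.of_forall fun ε =>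
      (intervalIntegrable_mul_conjPoissonKernel_smul hf ε x).def'.aestronglyMeasurable)
    (Eventually.of_forall fun ε => Eventually.of_forall fun t _ =>
      norm_mul_conjPoissonKernel_smul_le ε (x - t) (f t)) hf.norm ?_
  filter_upwards [volume.ae_ne x] with t ht _
  simpa using (tendsto_mul_conjPoissonKernel (sub_ne_zero.mpr ht.symm)).smul_const (f t)

theorem intervalIntegrable_slope_of_lipschitzOnWith {K : NNReal}
    (hf : LipschitzOnWith K f (uIcc a b)) (hx : x ∈ uIcc a b) :
    IntervalIntegrable (slope f x) volume a b := by
  have hmeas : AEStronglyMeasurable (slope f x) (volume.restrict (uIoc a b)) := by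
    have hinv : Measurable fun t => (t - x)⁻¹ := by fun_prop
    have hsub : ContinuousOn (fun t => f t - f x) (uIoc a b) :=
      (hf.continuousOn.mono uIoc_subset_uIcc).sub continuousOn_const
    exact hinv.aestronglyMeasurable.smul (hsub.aestronglyMeasurable measurableSet_uIoc)
  refine (intervalIntegrable_const (c := (K : ℝ))).mono_fun hmeas ?_
  filter_upwards [ae_restrict_mem measurableSet_uIoc] with t ht
  simpa using norm_slope_le_of_lipschitzOnWith hf hx (uIoc_subset_uIcc ht)

variable [CompleteSpace E]

theorem integral_conjPoissonKernel_smul (hf : IntervalIntegrable (slope f x) volume a b)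
    {ε : ℝ} (hε : ε ≠ 0) :
    ∫ t in a..b, conjPoissonKernel ε (x - t) • f t =
      (∫ s in (x - b)..(x - a), conjPoissonKernel ε s) • f x -
        ∫ t in a..b, ((x - t) * conjPoissonKernel ε (x - t)) • slope f x t := by
  have hsplit (t : ℝ) : conjPoissonKernel ε (x - t) • f t =
      conjPoissonKernel ε (x - t) • f x -
        ((x - t) * conjPoissonKernel ε (x - t)) • slope f x t := by
    rw [mul_comm, mul_smul, ← neg_sub t x, neg_smul, sub_smul_slope, vsub_eq_sub]
    module
  have hconst : IntervalIntegrable (fun t => conjPoissonKernel ε (x - t) • f x) volume a b :=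
    (((continuous_conjPoissonKernel hε).comp (continuous_sub_left x)).smul
      continuous_const).intervalIntegrable a b
  simp_rw [hsplit]
  rw [intervalIntegral.integral_sub hconst (intervalIntegrable_mul_conjPoissonKernel_smul hf ε x),
    intervalIntegral.integral_smul_const, intervalIntegral.integral_comp_sub_left]

theorem reducer_of_lipschitz_general (hf : IntervalIntegrable (slope f x) volume a b)
    (ha : x ≠ a) (hb : x ≠ b) :
    Tendsto (fun ε => (2 : ℝ) • ∫ t in a..b, conjPoissonKernel ε (x - t) • f t) (𝓝[≠] 0)
      (𝓝 ((2 * Real.log |(x - a) / (x - b)|) • f x - (2 : ℝ) • ∫ t in a..b, slope f x t)) := by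
  have hconst := (tendsto_integral_conjPoissonKernel (sub_ne_zero.mpr hb)
    (sub_ne_zero.mpr ha)).smul_const (f x)
  have hslope := (tendsto_integral_mul_conjPoissonKernel_smul hf x).mono_left
    (nhdsWithin_le_nhds (s := {0}ᶜ))
  rw [mul_smul, ← smul_sub]
  refine ((hconst.sub hslope).const_smul (2 : ℝ)).congr' ?_
  filter_upwards [self_mem_nhdsWithin] with ε hε
  rw [integral_conjPoissonKernel_smul hf hε]

end NormedSpace

end Reducer

/-- For a nonnegative Lipschitz density `ρ` on `[0,1]` and every `x ∈ (0,1)`, the reducer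
limit exists and equals `2ρ(x)·ln(x/(1−x)) − 2∫₀¹ (ρ(t)−ρ(x))/(t−x) dt`. -/
theorem reducer_of_lipschitz (ρ : ℝ → ℝ) (K : NNReal)
    (hlip : LipschitzOnWith K ρ (Icc (0 : ℝ) 1))
    (hnonneg : ∀ t ∈ Icc (0 : ℝ) 1, 0 ≤ ρ t)
    (x : ℝ) (hx : x ∈ Ioo (0 : ℝ) 1) :
    Tendsto
      (fun ε : ℝ => 2 * ∫ t in (0 : ℝ)..1, (x - t) * ρ t / ((x - t) ^ 2 + ε ^ 2))
      (nhdsWithin 0 (Ioi 0))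
      (nhds (2 * ρ x * Real.log (x / (1 - x)) -
        2 * ∫ t in (0 : ℝ)..1, (ρ t - ρ x) / (t - x))) := by
  rw [← uIcc_of_le zero_le_one] at hlip
  have hlim := reducer_of_lipschitz_general (intervalIntegrable_slope_of_lipschitzOnWith hlip
    (Icc_subset_uIcc (Ioo_subset_Icc_self hx))) hx.1.ne' hx.2.ne
  have hlog : Real.log |(x - 0) / (x - 1)| = Real.log (x / (1 - x)) := by
    rw [Real.log_abs, sub_zero, ← neg_sub 1 x, div_neg, Real.log_neg_eq_log]
  simpa only [conjPoissonKernel, smul_eq_mul, slope_def_field, hlog, div_mul_eq_mul_div,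
    mul_right_comm] using hlim.mono_left (nhdsGT_le_nhdsNE 0)
end

section
/- Let ρ : [0,1] → ℝ be a nonnegative function of class C¹ on [0,1]. Then for every x in the open interval (0,1), the reducer of ρ satisfies φ(x) = 2·[∫₀¹ ρ'(t)·ln|1 − t/x| dt + ρ(1)·ln(x/(1−x))]. -/
open MeasureTheory Filter Set

open scoped Topology

/-!
The kernel `(x - t) / ((x - t) ^ 2 + ε ^ 2)` is minus the `t`-derivative of
`log √((x - t) ^ 2 + ε ^ 2)`. Integrating by parts moves the derivative onto `ρ` and leaves only a
logarithmic singularity, which is integrable: for `|ε| ≤ 1` the regularised logarithm is bounded in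
absolute value by `|log |x - t|| + log 2`, so dominated convergence gives the limit `ε → 0`.
-/

/-- The reducer of the density `ρ` on the interval with endpoints `a`, `b` exists at the point `x`
and is equal to `φ`. -/
def HasReducerAt (ρ : ℝ → ℝ) (a b x φ : ℝ) : Prop :=
  Tendsto (fun ε : ℝ => 2 * ∫ t in a..b, (x - t) * ρ t / ((x - t) ^ 2 + ε ^ 2)) (𝓝[>] 0) (𝓝 φ)

/-- The regularised logarithm `log √(s² + ε²)`, a smooth substitute for `log |s|` when `ε ≠ 0`.
Halving the logarithm of the square avoids the square root. -/
noncomputable def regLog (ε s : ℝ) : ℝ :=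
  Real.log (s ^ 2 + ε ^ 2) / 2

@[simp]
theorem regLog_zero_left (s : ℝ) : regLog 0 s = Real.log s := by
  simp [regLog, Real.log_pow]

@[fun_prop]
theorem measurable_regLog (ε : ℝ) : Measurable (regLog ε) := by
  unfold regLog
  fun_prop

theorem tendsto_regLog_nhds_zero {s : ℝ} (hs : s ≠ 0) :
    Tendsto (fun ε => regLog ε s) (𝓝 0) (𝓝 (Real.log s)) := by
  have hne : s ^ 2 + (0 : ℝ) ^ 2 ≠ 0 := by simpa using hs
  have hcont : ContinuousAt (fun ε => regLog ε s) 0 := by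
    unfold regLog
    fun_prop (disch := assumption)
  simpa only [regLog_zero_left] using hcont.tendsto

theorem hasDerivAt_regLog {ε : ℝ} (hε : ε ≠ 0) (s : ℝ) :
    HasDerivAt (regLog ε) (s / (s ^ 2 + ε ^ 2)) s := by
  have hne : s ^ 2 + ε ^ 2 ≠ 0 := by positivity
  have hsq : HasDerivAt (fun s => s ^ 2 + ε ^ 2) (2 * s) s := by
    simpa using (hasDerivAt_pow 2 s).add_const (ε ^ 2)
  exact ((hsq.log hne).div_const 2).congr_deriv (by field_simp)

theorem abs_regLog_le {ε s : ℝ} (hs : s ≠ 0) (hε : |ε| ≤ 1) :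
    |regLog ε s| ≤ |Real.log s| + Real.log 2 := by
  have hs2 : 0 < s ^ 2 := by positivity
  have hε2 : ε ^ 2 ≤ 1 := (sq_le_one_iff_abs_le_one ε).2 hε
  have hlog2 : 0 < Real.log 2 := Real.log_pos one_lt_two
  have hlog_sq : Real.log (s ^ 2) = 2 * Real.log s := by simp [Real.log_pow]
  have hlower : Real.log (s ^ 2) ≤ Real.log (s ^ 2 + ε ^ 2) :=
    Real.log_le_log hs2 (le_add_of_nonneg_right (sq_nonneg ε))
  have hupper : Real.log (s ^ 2 + ε ^ 2) ≤ 2 * |Real.log s| + Real.log 2 := by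
    rcases le_total (s ^ 2) 1 with h | h
    · calc Real.log (s ^ 2 + ε ^ 2) ≤ Real.log 2 := Real.log_le_log (by positivity) (by linarith)
        _ ≤ 2 * |Real.log s| + Real.log 2 := le_add_of_nonneg_left (by positivity)
    · calc Real.log (s ^ 2 + ε ^ 2) ≤ Real.log (s ^ 2 * 2) :=
            Real.log_le_log (by positivity) (by linarith)
        _ = 2 * Real.log s + Real.log 2 := by rw [Real.log_mul hs2.ne' two_ne_zero, hlog_sq]
        _ ≤ 2 * |Real.log s| + Real.log 2 := by gcongr; exact le_abs_self _
  rw [regLog, abs_le]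
  constructor <;> linarith [neg_abs_le (Real.log s)]

theorem tendsto_integral_mul_regLog {α : Type*} [MeasurableSpace α] {μ : Measure α} {f s : α → ℝ}
    (hs : AEMeasurable s μ) (hs0 : ∀ᵐ t ∂μ, s t ≠ 0) (hf : Integrable f μ)
    (hlog : Integrable (fun t => f t * Real.log (s t)) μ) :
    Tendsto (fun ε => ∫ t, f t * regLog ε (s t) ∂μ) (𝓝 0)
      (𝓝 (∫ t, f t * Real.log (s t) ∂μ)) := by
  apply tendsto_integral_filter_of_dominated_convergence
    (fun t => |f t * Real.log (s t)| + |f t| * Real.log 2)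
  · exact Eventually.of_forall fun ε => hf.aestronglyMeasurable.mul
      ((measurable_regLog ε).comp_aemeasurable hs).aestronglyMeasurable
  · filter_upwards [Metric.closedBall_mem_nhds (0 : ℝ) one_pos] with ε hε
    have hε1 : |ε| ≤ 1 := by simpa using hε
    filter_upwards [hs0] with t ht
    calc ‖f t * regLog ε (s t)‖ = |f t| * |regLog ε (s t)| := abs_mul _ _
      _ ≤ |f t| * (|Real.log (s t)| + Real.log 2) := by gcongr; exact abs_regLog_le ht hε1
      _ = |f t * Real.log (s t)| + |f t| * Real.log 2 := by rw [mul_add, abs_mul]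
  · exact hlog.abs.add (hf.abs.mul_const _)
  · filter_upwards [hs0] with t ht
    exact (tendsto_regLog_nhds_zero ht).const_mul (f t)

section Reducer

variable {ρ ρ' : ℝ → ℝ} {a b x : ℝ}

theorem intervalIntegrable_mul_log_sub {f : ℝ → ℝ} (hf : ContinuousOn f (uIcc a b)) (x : ℝ) :
    IntervalIntegrable (fun t => f t * Real.log (x - t)) volume a b := by
  have hlog : IntervalIntegrable (fun t => Real.log (x - t)) volume a b := by
    simpa using (intervalIntegral.intervalIntegrable_log' (a := x - a) (b := x - b)).comp_sub_left x
  exact hlog.continuousOn_mul hf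

theorem tendsto_intervalIntegral_mul_regLog_sub {f : ℝ → ℝ}
    (hf : IntervalIntegrable f volume a b)
    (hlog : IntervalIntegrable (fun t => f t * Real.log (x - t)) volume a b) :
    Tendsto (fun ε => ∫ t in a..b, f t * regLog ε (x - t)) (𝓝 0)
      (𝓝 (∫ t in a..b, f t * Real.log (x - t))) := by
  have hne : ∀ᵐ t : ℝ, x - t ≠ 0 := by
    filter_upwards [Measure.ae_ne volume x] with t ht using sub_ne_zero.2 ht.symm
  simp only [intervalIntegral.intervalIntegral_eq_integral_uIoc]
  exact (tendsto_integral_mul_regLog (by fun_prop) (ae_restrict_of_ae hne) hf.def'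
    hlog.def').const_smul _

theorem integral_mul_div_sq_add_sq_eq (hcont : ContinuousOn ρ (uIcc a b))
    (hderiv : ∀ t ∈ Ioo (min a b) (max a b), HasDerivAt ρ (ρ' t) t)
    (hint : IntervalIntegrable ρ' volume a b) {ε : ℝ} (hε : ε ≠ 0) :
    ∫ t in a..b, (x - t) * ρ t / ((x - t) ^ 2 + ε ^ 2) =
      (∫ t in a..b, ρ' t * regLog ε (x - t)) + ρ a * regLog ε (x - a) -
        ρ b * regLog ε (x - b) := by
  have hreg (t : ℝ) :
      HasDerivAt (fun t => regLog ε (x - t)) (-((x - t) / ((x - t) ^ 2 + ε ^ 2))) t :=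
    (hasDerivAt_regLog hε (x - t)).comp_const_sub x t
  have hkernel : Continuous fun t => -((x - t) / ((x - t) ^ 2 + ε ^ 2)) := by
    have hne (t : ℝ) : (x - t) ^ 2 + ε ^ 2 ≠ 0 := by positivity
    fun_prop (disch := assumption)
  have hparts := intervalIntegral.integral_mul_deriv_eq_deriv_mul_of_hasDerivAt hcont
    (HasDerivAt.continuousOn fun t _ => hreg t) hderiv (fun t _ => hreg t) hint
    (hkernel.intervalIntegrable a b)
  calc ∫ t in a..b, (x - t) * ρ t / ((x - t) ^ 2 + ε ^ 2)
      = -∫ t in a..b, ρ t * -((x - t) / ((x - t) ^ 2 + ε ^ 2)) := by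
        rw [← intervalIntegral.integral_neg]
        congr! 2 with t
        ring
    _ = _ := by rw [hparts]; ring

theorem hasReducerAt_of_hasDerivAt (hxa : x ≠ a) (hxb : x ≠ b) (hcont : ContinuousOn ρ (uIcc a b))
    (hderiv : ∀ t ∈ Ioo (min a b) (max a b), HasDerivAt ρ (ρ' t) t)
    (hint : IntervalIntegrable ρ' volume a b)
    (hlog : IntervalIntegrable (fun t => ρ' t * Real.log (x - t)) volume a b) :
    HasReducerAt ρ a b x (2 * ((∫ t in a..b, ρ' t * Real.log (x - t)) +
      ρ a * Real.log (x - a) - ρ b * Real.log (x - b))) := by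
  have hlim := ((tendsto_intervalIntegral_mul_regLog_sub hint hlog).add
    ((tendsto_regLog_nhds_zero (sub_ne_zero.2 hxa)).const_mul (ρ a))).sub
    ((tendsto_regLog_nhds_zero (sub_ne_zero.2 hxb)).const_mul (ρ b))
  refine ((hlim.const_mul 2).mono_left nhdsWithin_le_nhds).congr' ?_
  filter_upwards [self_mem_nhdsWithin] with ε hε
  rw [integral_mul_div_sq_add_sq_eq hcont hderiv hint (ne_of_gt hε)]

theorem integral_mul_log_one_sub_div (hxa : x ≠ a) {f : ℝ → ℝ}
    (hf : IntervalIntegrable f volume a b)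
    (hlog : IntervalIntegrable (fun t => f t * Real.log (x - t)) volume a b) :
    ∫ t in a..b, f t * Real.log |1 - (t - a) / (x - a)| =
      (∫ t in a..b, f t * Real.log (x - t)) - (∫ t in a..b, f t) * Real.log (x - a) := by
  have hxa' : x - a ≠ 0 := sub_ne_zero.2 hxa
  rw [← intervalIntegral.integral_mul_const,
    ← intervalIntegral.integral_sub hlog (hf.mul_const _)]
  refine intervalIntegral.integral_congr_ae ?_
  filter_upwards [Measure.ae_ne volume x] with t ht _
  have hquot : 1 - (t - a) / (x - a) = (x - t) / (x - a) := by field_simp; ring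
  rw [Real.log_abs, hquot, Real.log_div (sub_ne_zero.2 ht.symm) hxa', mul_sub]

theorem reducer_of_C1_general_s3 (hxa : x ≠ a) (hxb : x ≠ b) (hcont : ContinuousOn ρ (uIcc a b))
    (hderiv : ∀ t ∈ Ioo (min a b) (max a b), HasDerivAt ρ (ρ' t) t)
    (hint : IntervalIntegrable ρ' volume a b)
    (hlog : IntervalIntegrable (fun t => ρ' t * Real.log (x - t)) volume a b) :
    HasReducerAt ρ a b x (2 * ((∫ t in a..b, ρ' t * Real.log |1 - (t - a) / (x - a)|) +
      ρ b * Real.log |(x - a) / (b - x)|)) := by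
  have hlog_quot : Real.log |(x - a) / (b - x)| = Real.log (x - a) - Real.log (x - b) := by
    rw [Real.log_abs, Real.log_div (sub_ne_zero.2 hxa) (sub_ne_zero.2 hxb.symm), ← neg_sub x b,
      Real.log_neg_eq_log]
  have hFTC : ∫ t in a..b, ρ' t = ρ b - ρ a :=
    intervalIntegral.integral_eq_sub_of_hasDeriv_right hcont
      (fun t ht => (hderiv t ht).hasDerivWithinAt) hint
  convert hasReducerAt_of_hasDerivAt hxa hxb hcont hderiv hint hlog using 2
  rw [integral_mul_log_one_sub_div hxa hint hlog, hFTC, hlog_quot]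
  ring

theorem hasReducerAt_of_continuousOn_deriv (hxa : x ≠ a) (hxb : x ≠ b)
    (hderiv : ∀ t ∈ uIcc a b, HasDerivWithinAt ρ (ρ' t) (uIcc a b) t)
    (hderiv_cont : ContinuousOn ρ' (uIcc a b)) :
    HasReducerAt ρ a b x (2 * ((∫ t in a..b, ρ' t * Real.log |1 - (t - a) / (x - a)|) +
      ρ b * Real.log |(x - a) / (b - x)|)) :=
  reducer_of_C1_general_s3 hxa hxb (HasDerivWithinAt.continuousOn hderiv)
    (fun t ht => (hderiv t (Ioo_subset_Icc_self ht)).hasDerivAt (Icc_mem_nhds ht.1 ht.2))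
    hderiv_cont.intervalIntegrable (intervalIntegrable_mul_log_sub hderiv_cont x)

end Reducer

/-- For a nonnegative density `ρ` of class `C¹` on `[0,1]` (with derivative `ρ'`) and
every `x ∈ (0,1)`, the reducer satisfies
`φ(x) = 2·[∫₀¹ ρ'(t)·ln|1 − t/x| dt + ρ(1)·ln(x/(1−x))]`. -/
theorem reducer_of_C1 (ρ ρ' : ℝ → ℝ)
    (hderiv : ∀ t ∈ Icc (0 : ℝ) 1, HasDerivWithinAt ρ (ρ' t) (Icc (0 : ℝ) 1) t)
    (hderiv_cont : ContinuousOn ρ' (Icc (0 : ℝ) 1))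
    (hnonneg : ∀ t ∈ Icc (0 : ℝ) 1, 0 ≤ ρ t)
    (x : ℝ) (hx : x ∈ Ioo (0 : ℝ) 1) :
    Tendsto
      (fun ε : ℝ => 2 * ∫ t in (0 : ℝ)..1, (x - t) * ρ t / ((x - t) ^ 2 + ε ^ 2))
      (nhdsWithin 0 (Ioi 0))
      (nhds (2 * ((∫ t in (0 : ℝ)..1, ρ' t * Real.log |1 - t / x|) +
        ρ 1 * Real.log (x / (1 - x))))) := by
  rw [← uIcc_of_le zero_le_one] at hderiv hderiv_cont
  simpa [HasReducerAt] using hasReducerAt_of_continuousOn_deriv hx.1.ne' hx.2.ne hderiv hderiv_cont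
end

section
/- Let 0 ≤ a < b be real numbers and let ρ : [a,b] → ℝ be a nonnegative function of class C¹ on [a,b]. Then for every x in the open interval (a,b) with x > 0, the reducer of ρ satisfies φ(x) = 2·[∫ₐᵇ ρ'(t)·ln|1 − t/x| dt + ρ(b)·ln(x/(b−x)) + ρ(a)·ln((x−a)/x)]. -/
open MeasureTheory Filter Set

/-!
The kernel `s / (s ^ 2 + ε ^ 2)` of the reducer is the derivative of `log √(s ^ 2 + ε ^ 2)`.
Integrating by parts moves the derivative onto the density and leaves only this logarithm, which
converges to `log |s|` as `ε → 0` and is dominated, uniformly in `|ε| ≤ 1`, by an integrable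
function. The limit is therefore an integral of `ρ'` against `log |x - t|`; the splitting
`log |x - t| = log |1 - t / x| + log |x|`, with `∫ ρ' = ρ b - ρ a`, moves the terms in `log |x|`
into the boundary values.
-/

open scoped Topology Interval

section RegularizedLog

/-- The logarithmic kernel `log |s|` regularized at scale `ε`, that is `log √(s ^ 2 + ε ^ 2)`. It is
the primitive of the kernel `s / (s ^ 2 + ε ^ 2)` of the reducer. The square root is taken outside
the logarithm as the factor `1 / 2`. -/
noncomputable def regularizedLog (ε s : ℝ) : ℝ :=
  Real.log (s ^ 2 + ε ^ 2) / 2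

variable {ε s : ℝ}

theorem hasDerivAt_regularizedLog (hε : ε ≠ 0) (s : ℝ) :
    HasDerivAt (regularizedLog ε) (s / (s ^ 2 + ε ^ 2)) s := by
  have hpos : s ^ 2 + ε ^ 2 ≠ 0 := by positivity
  exact ((((hasDerivAt_pow 2 s).add_const (ε ^ 2)).log hpos).div_const 2).congr_deriv
    (by push_cast; ring)

theorem measurable_regularizedLog (ε : ℝ) : Measurable (regularizedLog ε) := by
  unfold regularizedLog
  fun_prop

theorem continuous_regularizedLog (hε : ε ≠ 0) : Continuous (regularizedLog ε) :=
  continuous_iff_continuousAt.2 fun s => (hasDerivAt_regularizedLog hε s).continuousAt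

theorem regularizedLog_zero_left (s : ℝ) : regularizedLog 0 s = Real.log |s| := by
  simp [regularizedLog]

theorem tendsto_regularizedLog (hs : s ≠ 0) :
    Tendsto (fun ε => regularizedLog ε s) (𝓝 0) (𝓝 (Real.log |s|)) := by
  have hcont : ContinuousAt (fun ε => regularizedLog ε s) 0 :=
    ContinuousAt.div_const (ContinuousAt.log (by fun_prop) (by positivity)) 2
  simpa only [regularizedLog_zero_left] using hcont.tendsto

theorem regularizedLog_le_of_abs_le {δ : ℝ} (hs : s ≠ 0) (h : |δ| ≤ |ε|) :
    regularizedLog δ s ≤ regularizedLog ε s := by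
  have hsq : δ ^ 2 ≤ ε ^ 2 := sq_le_sq.2 h
  unfold regularizedLog
  gcongr

theorem regularizedLog_one_nonneg (s : ℝ) : 0 ≤ regularizedLog 1 s :=
  div_nonneg (Real.log_nonneg (by nlinarith [sq_nonneg s])) zero_le_two

theorem norm_regularizedLog_le (hs : s ≠ 0) (hε : |ε| ≤ 1) :
    ‖regularizedLog ε s‖ ≤ ‖Real.log |s|‖ + regularizedLog 1 s := by
  have lower : Real.log |s| ≤ regularizedLog ε s := by
    rw [← regularizedLog_zero_left]
    exact regularizedLog_le_of_abs_le hs (by simp)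
  have upper : regularizedLog ε s ≤ regularizedLog 1 s := regularizedLog_le_of_abs_le hs (by simpa)
  have hone := regularizedLog_one_nonneg s
  rw [Real.norm_eq_abs, Real.norm_eq_abs, abs_le]
  constructor <;> linarith [neg_abs_le (Real.log |s|), abs_nonneg (Real.log |s|)]

end RegularizedLog

section LogPotential

variable {a b x : ℝ} {f : ℝ → ℝ}

theorem intervalIntegrable_log_abs_sub (a b x : ℝ) :
    IntervalIntegrable (fun t => Real.log |x - t|) volume a b := by
  simpa only [Real.log_abs, sub_sub_cancel] using
    (intervalIntegral.intervalIntegrable_log' (a := x - a) (b := x - b)).comp_sub_left x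

theorem tendsto_integral_mul_regularizedLog (hf : IntervalIntegrable f volume a b)
    (hflog : IntervalIntegrable (fun t => f t * Real.log |x - t|) volume a b) :
    Tendsto (fun ε => ∫ t in a..b, f t * regularizedLog ε (x - t)) (𝓝 0)
      (𝓝 (∫ t in a..b, f t * Real.log |x - t|)) := by
  have hne : ∀ᵐ t : ℝ, x - t ≠ 0 :=
    (volume.ae_ne x).mono fun t ht => sub_ne_zero.2 ht.symm
  have hsmall : ∀ᶠ ε : ℝ in 𝓝 0, |ε| ≤ 1 :=
    continuous_abs.continuousAt.eventually_le_const (by simp)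
  have hcont : Continuous fun t => regularizedLog 1 (x - t) :=
    (continuous_regularizedLog one_ne_zero).comp (continuous_const.sub continuous_id)
  apply intervalIntegral.tendsto_integral_filter_of_dominated_convergence
    (fun t => ‖f t * Real.log |x - t|‖ + ‖f t‖ * regularizedLog 1 (x - t))
  · exact .of_forall fun ε => hf.aestronglyMeasurable_restrict_uIoc.mul
      ((measurable_regularizedLog ε).comp (measurable_const.sub measurable_id)).aestronglyMeasurable
  · filter_upwards [hsmall] with ε hε
    filter_upwards [hne] with t ht _
    calc ‖f t * regularizedLog ε (x - t)‖
        = ‖f t‖ * ‖regularizedLog ε (x - t)‖ := norm_mul _ _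
      _ ≤ ‖f t‖ * (‖Real.log |x - t|‖ + regularizedLog 1 (x - t)) := by
        gcongr
        exact norm_regularizedLog_le ht hε
      _ = ‖f t * Real.log |x - t|‖ + ‖f t‖ * regularizedLog 1 (x - t) := by
        rw [mul_add, norm_mul]
  · exact hflog.norm.add (hf.norm.mul_continuousOn hcont.continuousOn)
  · filter_upwards [hne] with t ht _
    exact (tendsto_regularizedLog ht).const_mul _

theorem integral_mul_log_abs_one_sub_div (hx : x ≠ 0) (hf : IntervalIntegrable f volume a b)
    (hflog : IntervalIntegrable (fun t => f t * Real.log |x - t|) volume a b) :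
    ∫ t in a..b, f t * Real.log |1 - t / x| =
      (∫ t in a..b, f t * Real.log |x - t|) - (∫ t in a..b, f t) * Real.log |x| := by
  rw [← intervalIntegral.integral_mul_const,
    ← intervalIntegral.integral_sub hflog (hf.mul_const _)]
  apply intervalIntegral.integral_congr_ae
  filter_upwards [volume.ae_ne x] with t ht _
  rw [one_sub_div hx, abs_div, Real.log_div (abs_ne_zero.2 (sub_ne_zero.2 ht.symm))
    (abs_ne_zero.2 hx), mul_sub]

end LogPotential

section Reducer

variable {a b x : ℝ} {ρ ρ' : ℝ → ℝ}

theorem integral_sub_mul_div_sq_add_sq_eq {ε : ℝ} (hε : ε ≠ 0) (hρ : ContinuousOn ρ [[a, b]])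
    (hderiv : ∀ t ∈ uIoo a b, HasDerivAt ρ (ρ' t) t) (hρ' : IntervalIntegrable ρ' volume a b) :
    ∫ t in a..b, (x - t) * ρ t / ((x - t) ^ 2 + ε ^ 2) =
      ρ a * regularizedLog ε (x - a) - ρ b * regularizedLog ε (x - b) +
        ∫ t in a..b, ρ' t * regularizedLog ε (x - t) := by
  have hprimitive (t : ℝ) : HasDerivAt (fun t => -regularizedLog ε (x - t))
      ((x - t) / ((x - t) ^ 2 + ε ^ 2)) t := by
    simpa using ((hasDerivAt_regularizedLog hε (x - t)).comp_const_sub x t).fun_neg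
  have hkernel : Continuous fun t : ℝ => (x - t) / ((x - t) ^ 2 + ε ^ 2) := by
    fun_prop (disch := intro t; positivity)
  calc ∫ t in a..b, (x - t) * ρ t / ((x - t) ^ 2 + ε ^ 2)
      = ∫ t in a..b, ρ t * ((x - t) / ((x - t) ^ 2 + ε ^ 2)) := by
        simp only [mul_comm (x - _), mul_div_assoc]
    _ = ρ b * -regularizedLog ε (x - b) - ρ a * -regularizedLog ε (x - a) -
          ∫ t in a..b, ρ' t * -regularizedLog ε (x - t) :=
        intervalIntegral.integral_mul_deriv_eq_deriv_mul_of_hasDerivAt hρ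
          (HasDerivAt.continuousOn fun t _ => hprimitive t) hderiv (fun t _ => hprimitive t) hρ'
          (hkernel.intervalIntegrable a b)
    _ = _ := by
        simp only [mul_neg, intervalIntegral.integral_neg]
        ring

theorem tendsto_integral_sub_mul_div_sq_add_sq (hxa : x ≠ a) (hxb : x ≠ b)
    (hρ : ContinuousOn ρ [[a, b]]) (hderiv : ∀ t ∈ uIoo a b, HasDerivAt ρ (ρ' t) t)
    (hρ' : IntervalIntegrable ρ' volume a b)
    (hρ'log : IntervalIntegrable (fun t => ρ' t * Real.log |x - t|) volume a b) :
    Tendsto (fun ε => ∫ t in a..b, (x - t) * ρ t / ((x - t) ^ 2 + ε ^ 2)) (𝓝[≠] 0)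
      (𝓝 (ρ a * Real.log |x - a| - ρ b * Real.log |x - b| +
        ∫ t in a..b, ρ' t * Real.log |x - t|)) := by
  have hlim := ((((tendsto_regularizedLog (sub_ne_zero.2 hxa)).const_mul (ρ a)).sub
    ((tendsto_regularizedLog (sub_ne_zero.2 hxb)).const_mul (ρ b))).add
    (tendsto_integral_mul_regularizedLog hρ' hρ'log)).mono_left (nhdsWithin_le_nhds (s := {0}ᶜ))
  refine hlim.congr' ?_
  filter_upwards [self_mem_nhdsWithin] with ε hε
  exact (integral_sub_mul_div_sq_add_sq_eq hε hρ hderiv hρ').symm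

theorem reducer_of_C1_general_general (hxa : x ≠ a) (hxb : x ≠ b) (hx : x ≠ 0)
    (hρ : ContinuousOn ρ [[a, b]]) (hderiv : ∀ t ∈ uIoo a b, HasDerivAt ρ (ρ' t) t)
    (hρ' : IntervalIntegrable ρ' volume a b)
    (hρ'log : IntervalIntegrable (fun t => ρ' t * Real.log |x - t|) volume a b) :
    Tendsto (fun ε => 2 * ∫ t in a..b, (x - t) * ρ t / ((x - t) ^ 2 + ε ^ 2)) (𝓝[≠] 0)
      (𝓝 (2 * ((∫ t in a..b, ρ' t * Real.log |1 - t / x|) +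
        ρ b * Real.log |x / (b - x)| + ρ a * Real.log |(x - a) / x|))) := by
  have hFTC : ∫ t in a..b, ρ' t = ρ b - ρ a :=
    intervalIntegral.integral_eq_sub_of_hasDeriv_right hρ
      (fun t ht => (hderiv t ht).hasDerivWithinAt) hρ'
  have hlog_b : Real.log |x / (b - x)| = Real.log |x| - Real.log |x - b| := by
    rw [abs_div, abs_sub_comm b, Real.log_div (abs_ne_zero.2 hx)
      (abs_ne_zero.2 (sub_ne_zero.2 hxb))]
  have hlog_a : Real.log |(x - a) / x| = Real.log |x - a| - Real.log |x| := by
    rw [abs_div, Real.log_div (abs_ne_zero.2 (sub_ne_zero.2 hxa)) (abs_ne_zero.2 hx)]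
  convert (tendsto_integral_sub_mul_div_sq_add_sq hxa hxb hρ hderiv hρ' hρ'log).const_mul 2 using 3
  rw [integral_mul_log_abs_one_sub_div hx hρ' hρ'log, hFTC, hlog_b, hlog_a]
  ring

end Reducer

/-- For `0 ≤ a < b`, a nonnegative density `ρ` of class `C¹` on `[a,b]` (with derivative
`ρ'`) and every `x ∈ (a,b)` with `x > 0`, the reducer satisfies
`φ(x) = 2·[∫ₐᵇ ρ'(t)·ln|1 − t/x| dt + ρ(b)·ln(x/(b−x)) + ρ(a)·ln((x−a)/x)]`. -/
theorem reducer_of_C1_general (a b : ℝ) (ha : 0 ≤ a) (hab : a < b)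
    (ρ ρ' : ℝ → ℝ)
    (hderiv : ∀ t ∈ Icc a b, HasDerivWithinAt ρ (ρ' t) (Icc a b) t)
    (hderiv_cont : ContinuousOn ρ' (Icc a b))
    (hnonneg : ∀ t ∈ Icc a b, 0 ≤ ρ t)
    (x : ℝ) (hx : x ∈ Ioo a b) (hxpos : 0 < x) :
    Tendsto
      (fun ε : ℝ => 2 * ∫ t in a..b, (x - t) * ρ t / ((x - t) ^ 2 + ε ^ 2))
      (nhdsWithin 0 (Ioi 0))
      (nhds (2 * ((∫ t in a..b, ρ' t * Real.log |1 - t / x|) +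
        ρ b * Real.log (x / (b - x)) + ρ a * Real.log ((x - a) / x)))) := by
  rw [← uIcc_of_lt hab] at hderiv hderiv_cont
  simpa only [Real.log_abs] using (reducer_of_C1_general_general hx.1.ne' hx.2.ne hxpos.ne'
    (HasDerivWithinAt.continuousOn hderiv)
    (fun t ht => (hderiv t (Ioo_subset_Icc_self ht)).hasDerivAt (Icc_mem_nhds ht.1 ht.2))
    hderiv_cont.intervalIntegrable
    ((intervalIntegrable_log_abs_sub a b x).continuousOn_mul hderiv_cont)).mono_left
    (nhdsGT_le_nhdsNE 0)
end

section
/- For the density ρ(x) = ln(1 + 1/√x) on (0,1), the reducer satisfies, for every x in (0,1): lim_{ε→0⁺} 2∫₀¹ (x−t)·ln(1+1/√t)/((x−t)²+ε²) dt = −2·ln(1/√x + 1)·ln(1/√x − 1). -/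
/-!
Since `(x - t) / ((x - t) ^ 2 + ε ^ 2)` is the real part of `1 / (x + iε - t)`, the reducer of a
density is twice the limit of the real part of its Stieltjes transform at `x + iε`. For
`ρ(t) = log (1 + 1 / √t)` the transform is explicit. Put `z = w ^ 2` and `t = u ^ 2`, so that
`2u / (w ^ 2 - u ^ 2) = 1 / (w - u) - 1 / (w + u)`, and write `log (1 + 1 / u) = ∫₀¹ da / (u + a)`.
In the resulting double integral the kernel `1 / (u + a)` is symmetric, so `1 / (w + u)` may be
replaced by `1 / (w + a)`, and then the partial fractions identity
`(1 / (w - u) - 1 / (w + a)) / (u + a) = 1 / (w - u) * 1 / (w + a)` separates the variables: the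
transform is `(log w - log (w - 1)) * (log (w + 1) - log w)`.
As `w → √x`, the second factor tends to a real number, so the jump of `log (w - 1)` across the cut
only affects the imaginary part of the product in the limit.
-/

open MeasureTheory Filter Set

section InverseKernel

lemma norm_inv_le_inv_abs_im {z : ℂ} (hz : z.im ≠ 0) : ‖z⁻¹‖ ≤ |z.im|⁻¹ := by
  rw [norm_inv]
  exact inv_anti₀ (abs_pos.2 hz) z.abs_im_le_norm

lemma integrable_mul_inv_of_im_eq {α : Type*} {_ : MeasurableSpace α} {μ : Measure α}
    {f g : α → ℂ} {c : ℝ} (hf : Integrable f μ) (hg : Measurable g) (hc : c ≠ 0)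
    (him : ∀ y, (g y).im = c) : Integrable (fun y => f y * (g y)⁻¹) μ :=
  hf.mul_bdd hg.inv.aestronglyMeasurable
    (.of_forall fun y => him y ▸ norm_inv_le_inv_abs_im (him y ▸ hc))

lemma inv_add_le_inv_sqrt_mul_inv_sqrt {a b : ℝ} (ha : 0 < a) (hb : 0 < b) :
    (a + b)⁻¹ ≤ (√a)⁻¹ * (√b)⁻¹ := by
  rw [← mul_inv]
  refine inv_anti₀ (by positivity) ?_
  nlinarith [sq_nonneg (√a - √b), Real.sq_sqrt ha.le, Real.sq_sqrt hb.le]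

lemma integrable_inv_add_prod {μ ν : Measure ℝ} [SFinite μ] [SFinite ν]
    (hμ : ∀ᵐ a ∂μ, 0 < a) (hν : ∀ᵐ b ∂ν, 0 < b)
    (hμi : Integrable (fun a => (√a)⁻¹) μ) (hνi : Integrable (fun b => (√b)⁻¹) ν) :
    Integrable (fun p : ℝ × ℝ => (p.1 + p.2)⁻¹) (μ.prod ν) := by
  refine (hμi.mul_prod hνi).mono' (by fun_prop) ?_
  filter_upwards [Measure.quasiMeasurePreserving_fst.ae hμ,
    Measure.quasiMeasurePreserving_snd.ae hν] with p h₁ h₂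
  rw [Real.norm_of_nonneg (by positivity)]
  exact inv_add_le_inv_sqrt_mul_inv_sqrt h₁ h₂

lemma add_ofReal_ne_zero_of_im_ne_zero {w : ℂ} (hw : w.im ≠ 0) (a : ℝ) : w + a ≠ 0 :=
  fun h => hw (by simpa using congrArg Complex.im h)

lemma sub_ofReal_ne_zero_of_im_ne_zero {w : ℂ} (hw : w.im ≠ 0) (a : ℝ) : w - a ≠ 0 :=
  fun h => hw (by simpa using congrArg Complex.im h)

lemma inv_sub_sub_inv_add {K : Type*} [Field K] {w u : K} (hsub : w - u ≠ 0) (hadd : w + u ≠ 0) :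
    (w - u)⁻¹ - (w + u)⁻¹ = 2 * u * (w ^ 2 - u ^ 2)⁻¹ := by
  rw [sq_sub_sq]
  field_simp
  ring

lemma inv_add_mul_inv_sub_sub_inv_add {K : Type*} [Field K] {w u a : K} (hsub : w - u ≠ 0)
    (hadd : w + a ≠ 0) (hua : u + a ≠ 0) :
    (u + a)⁻¹ * (w - u)⁻¹ - (u + a)⁻¹ * (w + a)⁻¹ = (w - u)⁻¹ * (w + a)⁻¹ := by
  field_simp
  ring

theorem integral_integral_inv_add_mul_inv_sub_sub_inv_add {μ : Measure ℝ} [SFinite μ]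
    (hpos : ∀ᵐ a ∂μ, 0 < a)
    (hint : Integrable (fun p : ℝ × ℝ => (p.1 + p.2)⁻¹) (μ.prod μ)) {w : ℂ} (hw : w.im ≠ 0) :
    ∫ u, ((∫ a, (u + a)⁻¹ ∂μ : ℝ) : ℂ) * ((w - u)⁻¹ - (w + u)⁻¹) ∂μ =
      (∫ u, (w - u)⁻¹ ∂μ) * ∫ a, (w + a)⁻¹ ∂μ := by
  let k : ℝ × ℝ → ℂ := fun p => ((p.1 + p.2)⁻¹ : ℝ)
  have hk : Integrable k (μ.prod μ) := hint.ofReal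
  have hsub : Integrable (fun p => k p * (w - p.1)⁻¹) (μ.prod μ) :=
    integrable_mul_inv_of_im_eq hk (by fun_prop) hw (by simp)
  have hadd₁ : Integrable (fun p => k p * (w + p.1)⁻¹) (μ.prod μ) :=
    integrable_mul_inv_of_im_eq hk (by fun_prop) hw (by simp)
  have hadd₂ : Integrable (fun p => k p * (w + p.2)⁻¹) (μ.prod μ) :=
    integrable_mul_inv_of_im_eq hk (by fun_prop) hw (by simp)
  have hswap : ∫ p, k p * (w + p.1)⁻¹ ∂μ.prod μ = ∫ p, k p * (w + p.2)⁻¹ ∂μ.prod μ := by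
    rw [← integral_prod_swap]
    simp only [k, Prod.fst_swap, Prod.snd_swap, add_comm]
  calc
    _ = ∫ u, ∫ a, k (u, a) * (w - u)⁻¹ - k (u, a) * (w + u)⁻¹ ∂μ ∂μ := by
      simp only [k, ← mul_sub, integral_mul_const, integral_complex_ofReal]
    _ = ∫ p, k p * (w - p.1)⁻¹ - k p * (w + p.1)⁻¹ ∂μ.prod μ :=
      (integral_prod _ (hsub.sub hadd₁)).symm
    _ = ∫ p, k p * (w - p.1)⁻¹ - k p * (w + p.2)⁻¹ ∂μ.prod μ := by
      rw [integral_sub hsub hadd₁, hswap, integral_sub hsub hadd₂]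
    _ = ∫ p : ℝ × ℝ, (w - p.1)⁻¹ * (w + p.2)⁻¹ ∂μ.prod μ := by
      refine integral_congr_ae ?_
      filter_upwards [Measure.quasiMeasurePreserving_fst.ae hpos,
        Measure.quasiMeasurePreserving_snd.ae hpos] with p h₁ h₂
      have hsum : (p.1 : ℂ) + p.2 ≠ 0 := mod_cast (add_pos h₁ h₂).ne'
      simpa only [k, Complex.ofReal_inv, Complex.ofReal_add] using
        inv_add_mul_inv_sub_sub_inv_add (sub_ofReal_ne_zero_of_im_ne_zero hw p.1)
          (add_ofReal_ne_zero_of_im_ne_zero hw p.2) hsum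
    _ = _ := integral_prod_mul (fun u : ℝ => (w - u)⁻¹) fun a : ℝ => (w + a)⁻¹

end InverseKernel

section StieltjesTransform

/-- The Stieltjes transform `z ↦ ∫ₐᵇ ρ(t) / (z - t) dt` of a density `ρ` on the interval with
endpoints `a` and `b`; the reducer of `ρ` at `x` is the limit of twice its real part along
`z = x + iε`. -/
noncomputable def stieltjesTransform (ρ : ℝ → ℝ) (a b : ℝ) (z : ℂ) : ℂ :=
  ∫ t in a..b, (ρ t : ℂ) * (z - t)⁻¹

lemma re_inv_add_mul_I (y ε : ℝ) : (y + ε * Complex.I : ℂ)⁻¹.re = y / (y ^ 2 + ε ^ 2) := by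
  rw [Complex.inv_re, Complex.normSq_add_mul_I]
  simp

lemma re_stieltjesTransform {ρ : ℝ → ℝ} {a b : ℝ} (hρ : IntervalIntegrable ρ volume a b)
    (x : ℝ) {ε : ℝ} (hε : ε ≠ 0) :
    (stieltjesTransform ρ a b (x + ε * Complex.I)).re =
      ∫ t in a..b, (x - t) * ρ t / ((x - t) ^ 2 + ε ^ 2) := by
  have hint : IntervalIntegrable (fun t => (ρ t : ℂ) * (x + ε * Complex.I - t)⁻¹) volume a b :=
    ⟨integrable_mul_inv_of_im_eq hρ.1.ofReal (by fun_prop) hε (by simp),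
      integrable_mul_inv_of_im_eq hρ.2.ofReal (by fun_prop) hε (by simp)⟩
  refine (intervalIntegral.intervalIntegral_re hint).symm.trans
    (intervalIntegral.integral_congr fun t _ => ?_)
  have hz : (x + ε * Complex.I - t : ℂ) = (x - t : ℝ) + ε * Complex.I := by push_cast; ring
  simp only [RCLike.re_to_complex, Complex.re_ofReal_mul, hz, re_inv_add_mul_I]
  ring

end StieltjesTransform

section Integrals

lemma integral_inv_add_ofReal {w : ℂ} (hw : w.im ≠ 0) (b c : ℝ) :
    ∫ a in b..c, (w + a)⁻¹ = Complex.log (w + c) - Complex.log (w + b) := by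
  refine intervalIntegral.integral_eq_sub_of_hasDerivAt
    (f := fun a : ℝ => Complex.log (w + a)) (fun a _ => ?_) ?_
  · have hlin : HasDerivAt (fun a : ℝ => w + (a : ℂ)) 1 a :=
      Complex.ofRealCLM.hasDerivAt.const_add w
    simpa using hlin.clog_real (.inr (by simpa using hw))
  · exact (Continuous.inv₀ (by fun_prop)
      (add_ofReal_ne_zero_of_im_ne_zero hw)).intervalIntegrable b c

lemma integral_inv_sub_ofReal {w : ℂ} (hw : w.im ≠ 0) (b c : ℝ) :
    ∫ a in b..c, (w - a)⁻¹ = Complex.log (w - b) - Complex.log (w - c) := by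
  simpa [sub_eq_add_neg, integral_inv_add_ofReal hw] using
    intervalIntegral.integral_comp_neg (a := b) (b := c) fun a : ℝ => (w + a)⁻¹

lemma integral_inv_const_add {u b : ℝ} (hu : 0 < u) (hb : 0 ≤ b) :
    ∫ a in 0..b, (u + a)⁻¹ = Real.log (1 + b / u) := by
  rw [intervalIntegral.integral_comp_add_left (fun y => y⁻¹),
    integral_inv_of_pos (by linarith) (by linarith), add_zero, add_div, div_self hu.ne']

lemma integral_two_mul_smul_comp_sq {E : Type*} [NormedAddCommGroup E] [NormedSpace ℝ E]
    (g : ℝ → E) {b : ℝ} (hb : 0 ≤ b) :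
    ∫ u in 0..b, (2 * u) • g (u ^ 2) = ∫ t in 0..b ^ 2, g t := by
  have h := intervalIntegral.integral_deriv_smul_comp_of_deriv_nonneg (a := 0) (b := b) (g := g)
    (f := fun u => u ^ 2) (f' := fun u => 2 * u) (by fun_prop)
    (fun u _ => by simpa using hasDerivAt_pow 2 u)
    (fun u hu => by rw [min_eq_left hb] at hu; linarith [hu.1])
  simpa using h

lemma intervalIntegrable_inv_sqrt (a b : ℝ) :
    IntervalIntegrable (fun t => (√t)⁻¹) volume a b := by
  refine (intervalIntegral.intervalIntegrable_rpow' (r := -(1 / 2)) (by norm_num)).mono_fun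
    (by fun_prop) (.of_forall fun t => ?_)
  rcases le_or_gt 0 t with ht | ht
  · dsimp only
    rw [Real.rpow_neg ht, ← Real.sqrt_eq_rpow]
  · simp [Real.sqrt_eq_zero_of_nonpos ht.le]

lemma intervalIntegrable_log_one_add_one_div_sqrt (a b : ℝ) :
    IntervalIntegrable (fun t => Real.log (1 + 1 / √t)) volume a b := by
  refine (intervalIntegrable_inv_sqrt a b).mono_fun
    (Measurable.aestronglyMeasurable (by fun_prop)) (.of_forall fun t => ?_)
  have hpos : 0 ≤ 1 / √t := by positivity
  dsimp only
  rw [Real.norm_of_nonneg (Real.log_nonneg (by linarith)), Real.norm_of_nonneg (by positivity)]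
  linarith [Real.log_le_sub_one_of_pos (by linarith : 0 < 1 + 1 / √t), one_div √t]

end Integrals

theorem stieltjesTransform_log_one_add_one_div_sqrt {w : ℂ} (hw : w.im ≠ 0) :
    stieltjesTransform (fun t => Real.log (1 + 1 / √t)) 0 1 (w ^ 2) =
      (Complex.log w - Complex.log (w - 1)) * (Complex.log (w + 1) - Complex.log w) := by
  let μ : Measure ℝ := volume.restrict (Ioc 0 1)
  have hpos : ∀ᵐ u ∂μ, 0 < u := (ae_restrict_mem measurableSet_Ioc).mono fun _ hu => hu.1
  have hsqrt : Integrable (fun u => (√u)⁻¹) μ := (intervalIntegrable_inv_sqrt 0 1).1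
  have hinterval {E : Type} [NormedAddCommGroup E] [NormedSpace ℝ E] (g : ℝ → E) :
      ∫ u, g u ∂μ = ∫ u in (0 : ℝ)..1, g u :=
    (intervalIntegral.integral_of_le zero_le_one).symm
  calc
    _ = ∫ u, (2 * u) • ((Real.log (1 + 1 / √(u ^ 2)) : ℂ) * (w ^ 2 - (u ^ 2 : ℝ))⁻¹) ∂μ := by
      rw [hinterval, integral_two_mul_smul_comp_sq
        (fun t => (Real.log (1 + 1 / √t) : ℂ) * (w ^ 2 - t)⁻¹) zero_le_one, one_pow,
        stieltjesTransform]
    _ = ∫ u, ((∫ a, (u + a)⁻¹ ∂μ : ℝ) : ℂ) * ((w - u)⁻¹ - (w + u)⁻¹) ∂μ := by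
      refine integral_congr_ae ?_
      filter_upwards [hpos] with u hu
      have hsub := sub_ofReal_ne_zero_of_im_ne_zero hw u
      have hadd := add_ofReal_ne_zero_of_im_ne_zero hw u
      rw [hinterval, integral_inv_const_add hu zero_le_one, Real.sqrt_sq hu.le,
        inv_sub_sub_inv_add hsub hadd, Complex.real_smul]
      push_cast
      ring
    _ = (∫ u, (w - u)⁻¹ ∂μ) * ∫ a, (w + a)⁻¹ ∂μ :=
      integral_integral_inv_add_mul_inv_sub_sub_inv_add hpos
        (integrable_inv_add_prod hpos hpos hsqrt hsqrt) hw
    _ = _ := by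
      rw [hinterval, hinterval, integral_inv_sub_ofReal hw, integral_inv_add_ofReal hw]
      simp

section BoundaryValue

lemma continuousAt_re_mul_of_im_eq_zero {X : Type*} [TopologicalSpace X] {f g : X → ℂ} {y₀ : X}
    {C : ℝ} (hf : ContinuousAt (fun y => (f y).re) y₀) (hC : ∀ᶠ y in nhds y₀, |(f y).im| ≤ C)
    (hg : ContinuousAt g y₀) (hg₀ : (g y₀).im = 0) :
    ContinuousAt (fun y => (f y * g y).re) y₀ := by
  have hgre : ContinuousAt (fun y => (g y).re) y₀ := Complex.continuous_re.continuousAt.comp hg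
  have hgim : Tendsto (fun y => (g y).im) (nhds y₀) (nhds 0) :=
    hg₀ ▸ (Complex.continuous_im.continuousAt.comp hg).tendsto
  have himim : ContinuousAt (fun y => (f y).im * (g y).im) y₀ := by
    simpa [ContinuousAt, hg₀] using bdd_le_mul_tendsto_zero' C hC hgim
  simp only [Complex.mul_re]
  exact (hf.mul hgre).sub himim

lemma continuousAt_re_log {z : ℂ} (hz : z ≠ 0) :
    ContinuousAt (fun y => (Complex.log y).re) z := by
  simpa only [Complex.log_re] using continuous_norm.continuousAt.log (norm_ne_zero_iff.2 hz)

lemma abs_im_log_sub_log_le (z w : ℂ) :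
    |(Complex.log z - Complex.log w).im| ≤ 2 * Real.pi := by
  rw [Complex.sub_im, Complex.log_im, Complex.log_im]
  linarith [abs_sub z.arg w.arg, z.abs_arg_le_pi, w.abs_arg_le_pi]

lemma continuousAt_re_log_sub_log_mul {s : ℝ} (hs : 0 < s) (hs₁ : s ≠ 1) :
    ContinuousAt (fun w : ℂ => ((Complex.log w - Complex.log (w - 1)) *
      (Complex.log (w + 1) - Complex.log w)).re) s := by
  have hs_mem : (s : ℂ) ∈ Complex.slitPlane := Complex.ofReal_mem_slitPlane.2 hs
  have hs_add_mem : (s : ℂ) + 1 ∈ Complex.slitPlane :=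
    mod_cast Complex.ofReal_mem_slitPlane.2 (by linarith : 0 < s + 1)
  have hs_sub : (s : ℂ) - 1 ≠ 0 := sub_ne_zero.2 (mod_cast hs₁)
  refine continuousAt_re_mul_of_im_eq_zero (C := 2 * Real.pi) ?_
    (.of_forall fun w => abs_im_log_sub_log_le _ _) ?_ ?_
  · simp only [Complex.sub_re]
    exact (continuousAt_re_log (Complex.slitPlane_ne_zero hs_mem)).sub
      ((continuousAt_re_log hs_sub).comp' (f := fun w : ℂ => w - 1) (by fun_prop))
  · exact ((continuousAt_id.add_const 1).clog hs_add_mem).sub (continuousAt_id.clog hs_mem)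
  · have hargs := Complex.arg_ofReal_of_nonneg hs.le
    have hargs₁ := Complex.arg_ofReal_of_nonneg (by linarith : 0 ≤ s + 1)
    push_cast at hargs₁
    simp [Complex.log_im, hargs, hargs₁]

lemma re_log_sub_log_mul_ofReal {s : ℝ} (hs : 0 < s) (hs₁ : s ≠ 1) :
    ((Complex.log s - Complex.log (s - 1)) * (Complex.log (s + 1) - Complex.log s)).re =
      -(Real.log (1 / s + 1) * Real.log |1 / s - 1|) := by
  have hadd : Real.log (1 / s + 1) = Real.log (s + 1) - Real.log s := by
    rw [← Real.log_div (by linarith) hs.ne', add_div, div_self hs.ne', add_comm]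
  have hsub : Real.log |1 / s - 1| = Real.log (s - 1) - Real.log s := by
    rw [← Real.log_div (sub_ne_zero.2 hs₁) hs.ne', ← Real.log_abs ((s - 1) / s), abs_sub_comm,
      sub_div, div_self hs.ne']
  have hreal : Complex.log (s + 1) - Complex.log s = (Real.log (1 / s + 1) : ℝ) := by
    rw [hadd, Complex.ofReal_sub, Complex.ofReal_log hs.le, Complex.ofReal_log (by linarith)]
    push_cast
    rfl
  have hre : (Complex.log ((s : ℂ) - 1)).re = Real.log (s - 1) := mod_cast Complex.log_ofReal_re _
  rw [hreal, Complex.re_mul_ofReal, Complex.sub_re, Complex.log_ofReal_re, hre, hsub]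
  ring

lemma im_ne_zero_of_im_sq_ne_zero {w : ℂ} (hw : (w ^ 2).im ≠ 0) : w.im ≠ 0 :=
  fun h => hw (by simp [pow_two, h])

lemma tendsto_sqrt_add_mul_I {x : ℝ} (hx : 0 ≤ x) :
    Tendsto (fun ε : ℝ => Complex.sqrt (x + ε * Complex.I)) (nhds 0) (nhds (√x : ℂ)) := by
  have hcont : ContinuousAt (fun ε : ℝ => Complex.sqrt (x + ε * Complex.I)) 0 :=
    (Complex.continuousAt_sqrt (.inl (by simpa using hx))).comp' (by fun_prop)
  have hsqrt : Complex.sqrt x = √x := Complex.sqrt_of_nonneg (Complex.zero_le_real.2 hx)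
  simpa [ContinuousAt, hsqrt] using hcont

lemma tendsto_re_stieltjesTransform_log_one_add_one_div_sqrt {x : ℝ} (hx : 0 < x) (hx₁ : x ≠ 1) :
    Tendsto
      (fun ε : ℝ =>
        (stieltjesTransform (fun t => Real.log (1 + 1 / √t)) 0 1 (x + ε * Complex.I)).re)
      (nhdsWithin 0 {0}ᶜ) (nhds (-(Real.log (1 / √x + 1) * Real.log |1 / √x - 1|))) := by
  have hs : 0 < √x := Real.sqrt_pos.2 hx
  have hs₁ : √x ≠ 1 := by simpa using hx₁
  rw [← re_log_sub_log_mul_ofReal hs hs₁]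
  refine ((continuousAt_re_log_sub_log_mul hs hs₁).tendsto.comp
    ((tendsto_sqrt_add_mul_I hx.le).mono_left nhdsWithin_le_nhds)).congr' ?_
  filter_upwards [self_mem_nhdsWithin] with ε hε
  have hsq : Complex.sqrt (x + ε * Complex.I) ^ 2 = x + ε * Complex.I :=
    Complex.cpow_ofNat_inv_pow _ 2
  have him : (Complex.sqrt (x + ε * Complex.I)).im ≠ 0 :=
    im_ne_zero_of_im_sq_ne_zero (by simpa [hsq] using hε)
  rw [← hsq, stieltjesTransform_log_one_add_one_div_sqrt him, Function.comp_apply]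

end BoundaryValue

theorem reducer_log_inv_sqrt_general {x : ℝ} (hx : 0 < x) (hx₁ : x ≠ 1) :
    Tendsto
      (fun ε : ℝ =>
        2 * ∫ t in (0 : ℝ)..1,
          (x - t) * Real.log (1 + 1 / Real.sqrt t) / ((x - t) ^ 2 + ε ^ 2))
      (nhdsWithin 0 (Ioi 0))
      (nhds (-2 * Real.log (1 / Real.sqrt x + 1) * Real.log |1 / Real.sqrt x - 1|)) := by
  have hlim := ((tendsto_re_stieltjesTransform_log_one_add_one_div_sqrt hx hx₁).mono_left
    (nhdsWithin_mono 0 fun ε (hε : 0 < ε) => hε.ne')).const_mul 2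
  rw [mul_neg, ← mul_assoc, ← neg_mul, ← neg_mul] at hlim
  refine hlim.congr' ?_
  filter_upwards [self_mem_nhdsWithin] with ε hε
  rw [re_stieltjesTransform (intervalIntegrable_log_one_add_one_div_sqrt 0 1) x (ne_of_gt hε)]

/-- For the density `ρ(t) = ln(1 + 1/√t)` on `(0,1)` and every `x ∈ (0,1)`,
`lim_{ε→0⁺} 2∫₀¹ (x−t)·ln(1+1/√t)/((x−t)²+ε²) dt = −2·ln(1/√x + 1)·ln(1/√x − 1)`. -/
theorem reducer_log_inv_sqrt (x : ℝ) (hx : x ∈ Ioo (0 : ℝ) 1) :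
    Tendsto
      (fun ε : ℝ =>
        2 * ∫ t in (0 : ℝ)..1,
          (x - t) * Real.log (1 + 1 / Real.sqrt t) / ((x - t) ^ 2 + ε ^ 2))
      (nhdsWithin 0 (Ioi 0))
      (nhds (-2 * Real.log (1 / Real.sqrt x + 1) * Real.log (1 / Real.sqrt x - 1))) := by
  simpa only [Real.log_abs] using reducer_log_inv_sqrt_general hx.1 hx.2.ne
end

section
/- For the density ρ(x) = (2/π)·arccos(1−2x) on (0,1), the reducer satisfies, for every x in (0,1): lim_{ε→0⁺} 2∫₀¹ (x−t)·(2/π)·arccos(1−2t)/((x−t)²+ε²) dt = −4·ln(4−4x). -/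
open MeasureTheory Filter Set

/-!
Integrating by parts moves the singular kernel onto `ρ' = 2 / (π √(t (1 - t)))`, the arcsine density
up to a factor, and leaves a boundary term at `t = 1`. As `ε → 0` the reducer becomes
`4 ∫ log |x - t| dν(t) - 4 log (1 - x)`, where `ν` is the arcsine law on `[0, 1]`. This law is the
equilibrium measure of `[0, 1]`, so its logarithmic potential is constant on `[0, 1]`, with value
`-log 4`. The substitution `t = (1 - cos θ) / 2` turns `ν` into the uniform law on `[0, π]`, and the
constancy then follows from the factorization of `cos θ - cos α` and the periodicity of `log |sin|`.
-/

section Regularization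

open Real Topology

lemma abs_log_sq_add_sq_le {y ε : ℝ} (hy : y ≠ 0) (hε : |ε| ≤ 1) :
    |log (y ^ 2 + ε ^ 2)| ≤ 2 * |log y| + log 2 := by
  have hy2 : 0 < y ^ 2 := by positivity
  have hε2 : ε ^ 2 ≤ 1 := (sq_le_one_iff_abs_le_one ε).2 hε
  have hlog2 : 0 ≤ log 2 := log_nonneg one_le_two
  have hlogsq : log (y ^ 2) = 2 * log y := by simp
  have lower : log (y ^ 2) ≤ log (y ^ 2 + ε ^ 2) :=
    log_le_log hy2 (le_add_of_nonneg_right (sq_nonneg ε))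
  have upper : log (y ^ 2 + ε ^ 2) ≤ 2 * |log y| + log 2 := by
    rcases le_total (y ^ 2) 1 with h | h
    · have : log (y ^ 2 + ε ^ 2) ≤ log 2 := log_le_log (by positivity) (by linarith)
      linarith [abs_nonneg (log y)]
    · calc log (y ^ 2 + ε ^ 2) ≤ log (y ^ 2 * 2) := log_le_log (by positivity) (by linarith)
        _ = 2 * log y + log 2 := by rw [log_mul hy2.ne' two_ne_zero, hlogsq]
        _ ≤ 2 * |log y| + log 2 := by gcongr; exact le_abs_self _
  exact abs_le.2 ⟨by linarith [neg_abs_le (log y)], upper⟩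

lemma tendsto_log_sq_add_sq {y : ℝ} (hy : y ≠ 0) :
    Tendsto (fun ε : ℝ => log (y ^ 2 + ε ^ 2)) (𝓝 0) (𝓝 (2 * log y)) := by
  have hcont : ContinuousAt (fun ε : ℝ => log (y ^ 2 + ε ^ 2)) 0 :=
    ContinuousAt.log (by fun_prop) (by simpa using hy)
  simpa [ContinuousAt] using hcont

lemma tendsto_integral_log_sq_add_sq {X : Type*} [MeasurableSpace X] {μ : Measure X}
    [IsFiniteMeasure μ] {f : X → ℝ} (hf : AEMeasurable f μ) (hf0 : ∀ᵐ a ∂μ, f a ≠ 0)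
    (hlog : Integrable (fun a => log (f a)) μ) :
    Tendsto (fun ε : ℝ => ∫ a, log (f a ^ 2 + ε ^ 2) ∂μ) (𝓝 0) (𝓝 (2 * ∫ a, log (f a) ∂μ)) := by
  rw [← integral_const_mul]
  refine tendsto_integral_filter_of_dominated_convergence (fun a => 2 * |log (f a)| + log 2)
    (Eventually.of_forall fun ε => ?_) ?_ ((hlog.abs.const_mul 2).add (integrable_const _)) ?_
  · exact ((hf.pow_const 2).add_const (ε ^ 2)).log.aestronglyMeasurable
  · filter_upwards [Metric.closedBall_mem_nhds (0 : ℝ) one_pos] with ε hε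
    filter_upwards [hf0] with a ha
    exact abs_log_sq_add_sq_le ha (by simpa using hε)
  · filter_upwards [hf0] with a ha using tendsto_log_sq_add_sq ha

lemma hasDerivAt_neg_log_sub_sq_add_sq (x t : ℝ) {ε : ℝ} (hε : ε ≠ 0) :
    HasDerivAt (fun t => -log ((x - t) ^ 2 + ε ^ 2)) (2 * (x - t) / ((x - t) ^ 2 + ε ^ 2)) t := by
  have hpos : (x - t) ^ 2 + ε ^ 2 ≠ 0 := by positivity
  have hquad : HasDerivAt (fun t => (x - t) ^ 2 + ε ^ 2) (-(2 * (x - t))) t := by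
    simpa using (((hasDerivAt_id t).const_sub x).pow 2).add_const (ε ^ 2)
  simpa [neg_div] using (hquad.log hpos).fun_neg

end Regularization

section LogarithmicPotential

open Real Interval

lemma ae_ne_zero_of_analyticOnNhd {f : ℝ → ℝ} (hf : AnalyticOnNhd ℝ f univ) {s : ℝ}
    (hs : f s ≠ 0) : ∀ᵐ t, f t ≠ 0 := by
  simpa using! ae_restrict_le_codiscreteWithin MeasurableSet.univ
    (hf.preimage_zero_mem_codiscrete hs)

lemma ae_cos_ne (c : ℝ) : ∀ᵐ θ : ℝ, cos θ ≠ c := by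
  have hanalytic : AnalyticOnNhd ℝ (fun θ => cos θ - c) univ := fun _ _ => by fun_prop
  obtain ⟨s, hs⟩ : ∃ s, cos s - c ≠ 0 := by
    by_contra! h
    have h0 := h 0
    have hπ := h π
    simp only [cos_zero, cos_pi] at h0 hπ
    linarith
  simpa only [sub_ne_zero] using ae_ne_zero_of_analyticOnNhd hanalytic hs

lemma intervalIntegrable_log_of_analyticOnNhd {f : ℝ → ℝ} {a b : ℝ}
    (hf : AnalyticOnNhd ℝ f [[a, b]]) :
    IntervalIntegrable (fun t => log (f t)) volume a b :=
  hf.meromorphicOn.intervalIntegrable_log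

-- The two shifted half-periods fit together to the full period `[α - π, α + π]` of `sin (u / 2)`.
lemma integral_log_sin_half_add_log_sin_half (α : ℝ) :
    ∫ θ in 0..π, (log (sin ((θ + α) / 2)) + log (sin ((α - θ) / 2))) = -2 * log 2 * π := by
  have hintegrable (a b : ℝ) : IntervalIntegrable (fun u => log (sin (u / 2))) volume a b :=
    intervalIntegrable_log_of_analyticOnNhd fun _ _ => by fun_prop
  have hper : Function.Periodic (fun u => log (sin u)) π := fun u => by
    simp only [sin_add_pi, log_neg_eq_log]
  calc ∫ θ in 0..π, (log (sin ((θ + α) / 2)) + log (sin ((α - θ) / 2)))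
    _ = (∫ θ in 0..π, log (sin ((θ + α) / 2))) + ∫ θ in 0..π, log (sin ((α - θ) / 2)) :=
      intervalIntegral.integral_add
        (intervalIntegrable_log_of_analyticOnNhd fun _ _ => by fun_prop)
        (intervalIntegrable_log_of_analyticOnNhd fun _ _ => by fun_prop)
    _ = (∫ u in (α - π)..α, log (sin (u / 2))) + ∫ u in α..(π + α), log (sin (u / 2)) := by
      rw [intervalIntegral.integral_comp_add_right (fun u => log (sin (u / 2))),
        intervalIntegral.integral_comp_sub_left (fun u => log (sin (u / 2))), zero_add, sub_zero,
        add_comm]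
    _ = ∫ u in (α - π)..(π + α), log (sin (u / 2)) :=
      intervalIntegral.integral_add_adjacent_intervals (hintegrable _ _) (hintegrable _ _)
    _ = 2 * ∫ u in ((α - π) / 2)..((α - π) / 2 + π), log (sin u) := by
      rw [intervalIntegral.integral_comp_div (fun u => log (sin u)) two_ne_zero, smul_eq_mul]
      ring_nf
    _ = 2 * ∫ u in 0..π, log (sin u) := by rw [hper.intervalIntegral_add_eq _ 0, zero_add]
    _ = -2 * log 2 * π := by rw [integral_log_sin_zero_pi]; ring

-- `Real.log` is `log |·|`, so the sign change of `cos θ - cos α` on `[0, π]` is harmless.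
lemma integral_log_cos_sub_cos (α : ℝ) :
    ∫ θ in 0..π, log (cos θ - cos α) = -log 2 * π := by
  have hfactor (θ : ℝ) : cos θ - cos α = 2 * (sin ((θ + α) / 2) * sin ((α - θ) / 2)) := by
    rw [cos_sub_cos, ← neg_sub α θ, neg_div, sin_neg]
    ring
  have hsplit : ∀ᵐ θ : ℝ, θ ∈ Ι 0 π → log (cos θ - cos α) =
      log 2 + (log (sin ((θ + α) / 2)) + log (sin ((α - θ) / 2))) := by
    filter_upwards [ae_cos_ne (cos α)] with θ hθ _
    have hne : sin ((θ + α) / 2) * sin ((α - θ) / 2) ≠ 0 :=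
      right_ne_zero_of_mul (hfactor θ ▸ sub_ne_zero.2 hθ)
    rw [hfactor, log_mul two_ne_zero hne,
      log_mul (left_ne_zero_of_mul hne) (right_ne_zero_of_mul hne)]
  rw [intervalIntegral.integral_congr_ae hsplit, intervalIntegral.integral_add
      intervalIntegrable_const, integral_log_sin_half_add_log_sin_half,
    intervalIntegral.integral_const, smul_eq_mul]
  · ring
  · exact (intervalIntegrable_log_of_analyticOnNhd fun _ _ => by fun_prop).add
      (intervalIntegrable_log_of_analyticOnNhd fun _ _ => by fun_prop)

lemma integral_log_sub_one_sub_cos_div_two {x : ℝ} (hx : x ∈ Icc 0 1) :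
    ∫ θ in 0..π, log (x - (1 - cos θ) / 2) = -2 * log 2 * π := by
  set α := arccos (1 - 2 * x)
  have hcos : cos α = 1 - 2 * x := cos_arccos (by linarith [hx.2]) (by linarith [hx.1])
  have hsplit : ∀ᵐ θ : ℝ, θ ∈ Ι 0 π →
      log (x - (1 - cos θ) / 2) = log (cos θ - cos α) - log 2 := by
    filter_upwards [ae_cos_ne (cos α)] with θ hθ _
    rw [← log_div (sub_ne_zero.2 hθ) two_ne_zero, hcos]
    ring_nf
  rw [intervalIntegral.integral_congr_ae hsplit, intervalIntegral.integral_sub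
      (intervalIntegrable_log_of_analyticOnNhd fun _ _ => by fun_prop) intervalIntegrable_const,
    integral_log_cos_sub_cos, intervalIntegral.integral_const, smul_eq_mul]
  ring

end LogarithmicPotential

section Reducer

open Real Topology Interval

lemma integral_mul_arccos_one_sub_two_mul {G g : ℝ → ℝ}
    (hG : ∀ t ∈ Icc 0 1, HasDerivAt G (g t) t) (hg : ContinuousOn g (Icc 0 1)) :
    ∫ t in 0..1, g t * arccos (1 - 2 * t) = π * G 1 - ∫ θ in 0..π, G ((1 - cos θ) / 2) := by
  have hmaps (θ : ℝ) : (1 - cos θ) / 2 ∈ Icc 0 1 :=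
    ⟨by linarith [cos_le_one θ], by linarith [neg_one_le_cos θ]⟩
  have hderiv (θ : ℝ) : HasDerivAt (fun θ => (1 - cos θ) / 2) (sin θ / 2) θ := by
    simpa using ((hasDerivAt_cos θ).const_sub 1).div_const 2
  have hcont : Continuous fun θ => g ((1 - cos θ) / 2) * (sin θ / 2) :=
    (hg.comp_continuous (by fun_prop) hmaps).mul (by fun_prop)
  calc ∫ t in 0..1, g t * arccos (1 - 2 * t)
    _ = ∫ θ in 0..π, g ((1 - cos θ) / 2) * arccos (1 - 2 * ((1 - cos θ) / 2)) * (sin θ / 2) := by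
      have hsubst := intervalIntegral.integral_comp_mul_deriv' (a := 0) (b := π)
        (g := fun t => g t * arccos (1 - 2 * t)) (fun θ _ => hderiv θ) (by fun_prop)
        ((hg.mul (continuous_arccos.comp (by fun_prop)).continuousOn).mono
          (image_subset_iff.2 fun θ _ => hmaps θ))
      simpa [one_add_one_eq_two] using hsubst.symm
    _ = ∫ θ in 0..π, θ * (g ((1 - cos θ) / 2) * (sin θ / 2)) := by
      refine intervalIntegral.integral_congr fun θ hθ => ?_
      rw [uIcc_of_le pi_pos.le] at hθ
      have harccos : arccos (1 - 2 * ((1 - cos θ) / 2)) = θ := by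
        rw [show 1 - 2 * ((1 - cos θ) / 2) = cos θ by ring, arccos_cos hθ.1 hθ.2]
      simp only [harccos]
      ring
    _ = π * G 1 - ∫ θ in 0..π, G ((1 - cos θ) / 2) := by
      have hparts := intervalIntegral.integral_mul_deriv_eq_deriv_mul (a := 0) (b := π)
        (fun θ _ => hasDerivAt_id θ) (fun θ _ => (hG _ (hmaps θ)).comp θ (hderiv θ))
        intervalIntegrable_const (hcont.intervalIntegrable 0 π)
      simpa [one_add_one_eq_two] using hparts

lemma two_mul_integral_arccos_kernel (x : ℝ) {ε : ℝ} (hε : ε ≠ 0) :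
    2 * ∫ t in 0..1, (x - t) * ((2 / π) * arccos (1 - 2 * t)) / ((x - t) ^ 2 + ε ^ 2) =
      2 / π * (∫ θ in 0..π, log ((x - (1 - cos θ) / 2) ^ 2 + ε ^ 2)) -
        2 * log ((x - 1) ^ 2 + ε ^ 2) := by
  have hcont : Continuous fun t => 2 * (x - t) / ((x - t) ^ 2 + ε ^ 2) :=
    Continuous.div (by fun_prop) (by fun_prop) fun t => by positivity
  have hparts := integral_mul_arccos_one_sub_two_mul
    (fun t _ => hasDerivAt_neg_log_sub_sq_add_sq x t hε) hcont.continuousOn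
  calc 2 * ∫ t in 0..1, (x - t) * ((2 / π) * arccos (1 - 2 * t)) / ((x - t) ^ 2 + ε ^ 2)
    _ = 2 / π * ∫ t in 0..1, 2 * (x - t) / ((x - t) ^ 2 + ε ^ 2) * arccos (1 - 2 * t) := by
      simp only [← intervalIntegral.integral_const_mul]
      congr 1 with t
      ring
    _ = _ := by
      rw [hparts, intervalIntegral.integral_neg]
      field_simp
      ring

lemma tendsto_two_mul_integral_arccos_kernel {x : ℝ} (hx : x ≠ 1) :
    Tendsto
      (fun ε : ℝ =>
        2 * ∫ t in 0..1, (x - t) * ((2 / π) * arccos (1 - 2 * t)) / ((x - t) ^ 2 + ε ^ 2))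
      (𝓝[≠] 0)
      (𝓝 (4 / π * (∫ θ in 0..π, log (x - (1 - cos θ) / 2)) - 4 * log (1 - x))) := by
  have hne : ∀ᵐ θ : ℝ, x - (1 - cos θ) / 2 ≠ 0 := by
    filter_upwards [ae_cos_ne (1 - 2 * x)] with θ hθ h
    exact hθ (by linarith)
  have hpotential : Tendsto (fun ε : ℝ => ∫ θ in 0..π, log ((x - (1 - cos θ) / 2) ^ 2 + ε ^ 2))
      (𝓝 0) (𝓝 (2 * ∫ θ in 0..π, log (x - (1 - cos θ) / 2))) := by
    simp only [intervalIntegral.integral_of_le pi_pos.le]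
    exact tendsto_integral_log_sq_add_sq (by fun_prop) (ae_restrict_of_ae hne)
      (intervalIntegrable_log_of_analyticOnNhd fun _ _ => by fun_prop).1
  have hlim := ((hpotential.const_mul (2 / π)).sub
    ((tendsto_log_sq_add_sq (sub_ne_zero.2 hx)).const_mul 2)).mono_left
      (nhdsWithin_le_nhds (s := {0}ᶜ))
  rw [← neg_sub x 1, log_neg_eq_log]
  refine (hlim.congr' ?_).trans_eq ?_
  · filter_upwards [self_mem_nhdsWithin] with ε hε
    exact (two_mul_integral_arccos_kernel x hε).symm
  · ring_nf

end Reducer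

/-- For the density `ρ(t) = (2/π)·arccos(1−2t)` on `(0,1)` and every `x ∈ (0,1)`,
`lim_{ε→0⁺} 2∫₀¹ (x−t)·(2/π)·arccos(1−2t)/((x−t)²+ε²) dt = −4·ln(4−4x)`. -/
theorem reducer_arccos (x : ℝ) (hx : x ∈ Ioo (0 : ℝ) 1) :
    Tendsto
      (fun ε : ℝ =>
        2 * ∫ t in (0 : ℝ)..1,
          (x - t) * ((2 / Real.pi) * Real.arccos (1 - 2 * t)) / ((x - t) ^ 2 + ε ^ 2))
      (nhdsWithin 0 (Ioi 0))
      (nhds (-4 * Real.log (4 - 4 * x))) := by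
  have hlog : Real.log (4 - 4 * x) = 2 * Real.log 2 + Real.log (1 - x) := by
    rw [show 4 - 4 * x = 2 ^ 2 * (1 - x) by ring,
      Real.log_mul (by norm_num) (sub_ne_zero.2 hx.2.ne'), Real.log_pow, Nat.cast_two]
  have hlim := (tendsto_two_mul_integral_arccos_kernel hx.2.ne).mono_left (nhdsGT_le_nhdsNE 0)
  rw [integral_log_sub_one_sub_cos_div_two (Ioo_subset_Icc_self hx)] at hlim
  convert hlim using 2
  rw [hlog]
  field_simp
  ring
end

section
/- Let ρ be a nonnegative continuous probability density on a compact interval [a,b] (so ∫ₐᵇ ρ = 1) with moments cₖ = ∫ₐᵇ tᵏ ρ(t) dt. Then for every natural number n ≥ 1: lim_{ε→0⁺} ∫ₐᵇ∫ₐᵇ 2(x−t)·xⁿ·ρ(t)·ρ(x)/((x−t)²+ε²) dt dx = ∫ₐᵇ∫ₐᵇ ((xⁿ−tⁿ)/(x−t))·ρ(t)·ρ(x) dt dx = Σ_{k=0}^{n−1} cₖ·c_{n−1−k}. (This computes the moments of the reducer φ of ρ: σ'ₙ = Σ_{k=0}^{n−1} cₖ·c_{n−1−k}, the key step in Theorem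 2.1.) -/
open MeasureTheory Filter Set Finset

/-!
Exchanging `x` and `t` changes the sign of `(x - t) / ((x - t) ^ 2 + ε ^ 2)`, so averaging the
integrand with its transpose replaces `2 * x ^ n` by `x ^ n - t ^ n = (x - t) * S x t`, where
`S x t = ∑ k < n, t ^ k * x ^ (n - 1 - k)`. The double integral therefore equals that of
`S x t * ρ t * ρ x` against the factor `(x - t) ^ 2 / ((x - t) ^ 2 + ε ^ 2)`, which is bounded by
`1` and tends to `1` off the diagonal. The diagonal is null, so dominated convergence removes the
factor, and Fubini's theorem splits the remaining integral into products of moments.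
-/

section Regularization

theorem norm_sq_div_sq_add_sq_le_one (d ε : ℝ) : ‖d ^ 2 / (d ^ 2 + ε ^ 2)‖ ≤ 1 := by
  rw [Real.norm_of_nonneg (by positivity)]
  exact div_le_one_of_le₀ (le_add_of_nonneg_right (sq_nonneg ε)) (by positivity)

theorem tendsto_sq_div_sq_add_sq {d : ℝ} (hd : d ≠ 0) :
    Tendsto (fun ε : ℝ => d ^ 2 / (d ^ 2 + ε ^ 2)) (nhds 0) (nhds 1) := by
  have hcont : ContinuousAt (fun ε : ℝ => d ^ 2 / (d ^ 2 + ε ^ 2)) 0 :=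
    ContinuousAt.div (by fun_prop) (by fun_prop) (by positivity)
  simpa [hd] using hcont.tendsto

theorem norm_two_mul_div_sq_add_sq_le (d : ℝ) {ε : ℝ} (hε : ε ≠ 0) :
    ‖2 * d / (d ^ 2 + ε ^ 2)‖ ≤ |ε|⁻¹ := by
  have hamgm : 2 * |d| * |ε| ≤ d ^ 2 + ε ^ 2 := by
    simpa only [sq_abs] using two_mul_le_add_sq |d| |ε|
  have hpos : 0 < d ^ 2 + ε ^ 2 := by positivity
  rw [norm_div, norm_mul, Real.norm_two, Real.norm_eq_abs, Real.norm_of_nonneg hpos.le,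
    div_le_iff₀ hpos, ← div_eq_inv_mul, le_div_iff₀ (abs_pos.mpr hε)]
  exact hamgm

theorem tendsto_integral_sq_div_sq_add_sq_smul {α E : Type*} [MeasurableSpace α]
    [NormedAddCommGroup E] [NormedSpace ℝ E] {μ : Measure α} {u : α → ℝ} {g : α → E}
    (hu : AEStronglyMeasurable u μ) (hu_ne : ∀ᵐ z ∂μ, u z ≠ 0) (hg : Integrable g μ) :
    Tendsto (fun ε : ℝ => ∫ z, (u z ^ 2 / (u z ^ 2 + ε ^ 2)) • g z ∂μ)
      (nhds 0) (nhds (∫ z, g z ∂μ)) := by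
  refine tendsto_integral_filter_of_dominated_convergence (fun z => ‖g z‖) ?_ ?_ hg.norm ?_
  · exact .of_forall fun ε =>
      ((hu.pow 2).div₀ ((hu.pow 2).add aestronglyMeasurable_const)).smul hg.1
  · refine .of_forall fun ε => .of_forall fun z => ?_
    rw [norm_smul]
    exact mul_le_of_le_one_left (norm_nonneg _) (norm_sq_div_sq_add_sq_le_one (u z) ε)
  · filter_upwards [hu_ne] with z hz
    simpa only [one_smul] using (tendsto_sq_div_sq_add_sq hz).smul_const (g z)

end Regularization

section ProductMeasure

variable {α : Type*} [MeasurableSpace α] {μ : Measure α} [SFinite μ]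

theorem ae_prod_self_fst_ne_snd [MeasurableEq α] [NullSingletonClass μ] :
    ∀ᵐ z ∂μ.prod μ, z.1 ≠ z.2 :=
  (Measure.ae_prod_iff_ae_ae measurableSet_diagonal.compl).mpr <|
    .of_forall fun x => (Measure.ae_ne μ x).mono fun _ h => h.symm

theorem integral_prod_self_eq_integral_average_swap {E : Type*} [NormedAddCommGroup E]
    [NormedSpace ℝ E] {f : α × α → E} (hf : Integrable f (μ.prod μ)) :
    ∫ z, f z ∂μ.prod μ = ∫ z, (2⁻¹ : ℝ) • (f z + f z.swap) ∂μ.prod μ := by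
  have hsum : ∫ z, (f z + f z.swap) ∂μ.prod μ = (2 : ℝ) • ∫ z, f z ∂μ.prod μ := by
    rw [two_smul]
    exact (integral_add hf hf.swap).trans (congrArg _ (integral_prod_swap f))
  rw [integral_smul, hsum, inv_smul_smul₀ two_ne_zero]

end ProductMeasure

section Moments

variable {μ : Measure ℝ} {ρ : ℝ → ℝ} {n : ℕ}

theorem integrable_pow_mul_of_le (hρ : Integrable ρ μ)
    (hpow : Integrable (fun t => t ^ n * ρ t) μ) {k : ℕ} (hk : k ≤ n) :
    Integrable (fun t => t ^ k * ρ t) μ := by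
  refine (hρ.norm.add hpow.norm).mono' ((by fun_prop : AEStronglyMeasurable (· ^ k) μ).mul hρ.1)
    (.of_forall fun t => ?_)
  have hpow_le : |t| ^ k ≤ 1 + |t| ^ n := by
    rcases le_total |t| 1 with ht | ht
    · exact (pow_le_one₀ (abs_nonneg t) ht).trans (le_add_of_nonneg_right (by positivity))
    · exact (pow_le_pow_right₀ ht hk).trans (le_add_of_nonneg_left zero_le_one)
  calc ‖t ^ k * ρ t‖ = |t| ^ k * ‖ρ t‖ := by rw [norm_mul, norm_pow, Real.norm_eq_abs t]
    _ ≤ (1 + |t| ^ n) * ‖ρ t‖ := by gcongr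
    _ = ‖ρ t‖ + ‖t ^ n * ρ t‖ := by
      rw [norm_mul, norm_pow, Real.norm_eq_abs t]; ring

theorem geom_sum₂_mul_mul_eq_sum (ρ : ℝ → ℝ) (n : ℕ) (x t : ℝ) :
    (∑ k ∈ Finset.range n, t ^ k * x ^ (n - 1 - k)) * ρ t * ρ x =
      ∑ k ∈ Finset.range n, (x ^ (n - 1 - k) * ρ x) * (t ^ k * ρ t) := by
  simp only [Finset.sum_mul]
  exact Finset.sum_congr rfl fun k _ => by ring

theorem average_swap_regularized_kernel (ρ : ℝ → ℝ) (n : ℕ) {ε : ℝ} (hε : ε ≠ 0) (x t : ℝ) :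
    2⁻¹ * (2 * (x - t) * x ^ n * ρ t * ρ x / ((x - t) ^ 2 + ε ^ 2) +
        2 * (t - x) * t ^ n * ρ x * ρ t / ((t - x) ^ 2 + ε ^ 2)) =
      (x - t) ^ 2 / ((x - t) ^ 2 + ε ^ 2) *
        ((∑ k ∈ Finset.range n, t ^ k * x ^ (n - 1 - k)) * ρ t * ρ x) := by
  have hfactor := (Commute.all t x).geom_sum₂_mul n
  have hden : (x - t) ^ 2 + ε ^ 2 ≠ 0 := by positivity
  rw [← neg_sub x t, neg_sq]
  field_simp
  linear_combination ((x - t) * ρ t * ρ x) * hfactor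

theorem integrable_prod_pow_mul (hρ : Integrable ρ μ)
    (hpow : Integrable (fun t => t ^ n * ρ t) μ) {j k : ℕ} (hj : j ≤ n) (hk : k ≤ n) :
    Integrable (fun z : ℝ × ℝ => (z.1 ^ j * ρ z.1) * (z.2 ^ k * ρ z.2)) (μ.prod μ) :=
  (integrable_pow_mul_of_le hρ hpow hj).mul_prod (integrable_pow_mul_of_le hρ hpow hk)

theorem integrable_geom_sum₂_mul_mul (hρ : Integrable ρ μ)
    (hpow : Integrable (fun t => t ^ n * ρ t) μ) :
    Integrable (fun z : ℝ × ℝ =>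
      (∑ k ∈ Finset.range n, z.2 ^ k * z.1 ^ (n - 1 - k)) * ρ z.2 * ρ z.1) (μ.prod μ) := by
  simp only [geom_sum₂_mul_mul_eq_sum]
  exact integrable_finsetSum _ fun k hk =>
    integrable_prod_pow_mul hρ hpow (by lia) (Finset.mem_range.mp hk).le

theorem integrable_regularized_kernel (hρ : Integrable ρ μ)
    (hpow : Integrable (fun t => t ^ n * ρ t) μ) {ε : ℝ} (hε : ε ≠ 0) :
    Integrable (fun z : ℝ × ℝ =>
      2 * (z.1 - z.2) * z.1 ^ n * ρ z.2 * ρ z.1 / ((z.1 - z.2) ^ 2 + ε ^ 2)) (μ.prod μ) := by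
  have hmeas : Measurable fun z : ℝ × ℝ => 2 * (z.1 - z.2) / ((z.1 - z.2) ^ 2 + ε ^ 2) := by
    fun_prop
  refine ((hpow.mul_prod hρ).bdd_mul hmeas.aestronglyMeasurable <| .of_forall fun z =>
    norm_two_mul_div_sq_add_sq_le (z.1 - z.2) hε).congr (.of_forall fun z => ?_)
  ring

variable [SFinite μ]

theorem integral_geom_sum₂_mul_mul (hρ : Integrable ρ μ)
    (hpow : Integrable (fun t => t ^ n * ρ t) μ) :
    ∫ z : ℝ × ℝ, (∑ k ∈ Finset.range n, z.2 ^ k * z.1 ^ (n - 1 - k)) * ρ z.2 * ρ z.1 ∂μ.prod μ =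
      ∑ k ∈ Finset.range n, (∫ t, t ^ k * ρ t ∂μ) * ∫ t, t ^ (n - 1 - k) * ρ t ∂μ := by
  simp only [geom_sum₂_mul_mul_eq_sum]
  rw [integral_finsetSum _ fun k hk =>
    integrable_prod_pow_mul hρ hpow (by lia) (Finset.mem_range.mp hk).le]
  refine Finset.sum_congr rfl fun k _ => ?_
  rw [integral_prod_mul (fun x => x ^ (n - 1 - k) * ρ x) (fun t => t ^ k * ρ t), mul_comm]

theorem integral_regularized_kernel (hρ : Integrable ρ μ)
    (hpow : Integrable (fun t => t ^ n * ρ t) μ) {ε : ℝ} (hε : ε ≠ 0) :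
    ∫ x, ∫ t, 2 * (x - t) * x ^ n * ρ t * ρ x / ((x - t) ^ 2 + ε ^ 2) ∂μ ∂μ =
      ∫ z : ℝ × ℝ, (z.1 - z.2) ^ 2 / ((z.1 - z.2) ^ 2 + ε ^ 2) *
        ((∑ k ∈ Finset.range n, z.2 ^ k * z.1 ^ (n - 1 - k)) * ρ z.2 * ρ z.1) ∂μ.prod μ := by
  have hint := integrable_regularized_kernel hρ hpow hε
  rw [integral_integral hint, integral_prod_self_eq_integral_average_swap hint]
  exact integral_congr_ae <| .of_forall fun z =>
    average_swap_regularized_kernel ρ n hε z.1 z.2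

end Moments

theorem reducer_moments_general (μ : Measure ℝ) [SFinite μ] [NullSingletonClass μ] (ρ : ℝ → ℝ)
    (n : ℕ) (hρ : Integrable ρ μ) (hpow : Integrable (fun t => t ^ n * ρ t) μ)
    (c : ℕ → ℝ) (hc : ∀ k, c k = ∫ t, t ^ k * ρ t ∂μ) :
    Tendsto
      (fun ε : ℝ => ∫ x, ∫ t, 2 * (x - t) * x ^ n * ρ t * ρ x / ((x - t) ^ 2 + ε ^ 2) ∂μ ∂μ)
      (nhdsWithin 0 (Ioi 0))
      (nhds (∑ k ∈ Finset.range n, c k * c (n - 1 - k))) ∧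
    (∫ x, ∫ t, (∑ k ∈ Finset.range n, t ^ k * x ^ (n - 1 - k)) * ρ t * ρ x ∂μ ∂μ) =
      ∑ k ∈ Finset.range n, c k * c (n - 1 - k) := by
  have hint := integrable_geom_sum₂_mul_mul hρ hpow
  have hoff_diag : ∀ᵐ z ∂μ.prod μ, z.1 - z.2 ≠ 0 :=
    ae_prod_self_fst_ne_snd.mono fun _ => sub_ne_zero.mpr
  simp only [hc, ← integral_geom_sum₂_mul_mul hρ hpow]
  refine ⟨?_, integral_integral hint⟩
  refine ((tendsto_integral_sq_div_sq_add_sq_smul (by fun_prop) hoff_diag hint).mono_left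
    nhdsWithin_le_nhds).congr' ?_
  filter_upwards [self_mem_nhdsWithin] with ε hε
  exact (integral_regularized_kernel hρ hpow (ne_of_gt hε)).symm

/-- Moments of the reducer (key step of Theorem 2.1): for a continuous nonnegative
probability density `ρ` on a compact interval `[a,b]` with moments `cₖ`, and every `n ≥ 1`,
`lim_{ε→0⁺} ∫ₐᵇ∫ₐᵇ 2(x−t)·xⁿ·ρ(t)·ρ(x)/((x−t)²+ε²) dt dx
  = ∫ₐᵇ∫ₐᵇ ((xⁿ−tⁿ)/(x−t))·ρ(t)·ρ(x) dt dx = Σ_{k=0}^{n−1} cₖ·c_{n−1−k}`,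
where `(xⁿ−tⁿ)/(x−t)` denotes the polynomial `Σ_{k=0}^{n−1} tᵏ·x^{n−1−k}`. -/
theorem reducer_moments (a b : ℝ) (hab : a < b) (ρ : ℝ → ℝ)
    (hcont : ContinuousOn ρ (Icc a b))
    (hnonneg : ∀ t ∈ Icc a b, 0 ≤ ρ t)
    (hprob : (∫ t in a..b, ρ t) = 1)
    (c : ℕ → ℝ) (hc : ∀ k, c k = ∫ t in a..b, t ^ k * ρ t)
    (n : ℕ) (hn : 1 ≤ n) :
    Tendsto
      (fun ε : ℝ =>
        ∫ x in a..b, ∫ t in a..b,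
          2 * (x - t) * x ^ n * ρ t * ρ x / ((x - t) ^ 2 + ε ^ 2))
      (nhdsWithin 0 (Ioi 0))
      (nhds (∑ k ∈ Finset.range n, c k * c (n - 1 - k))) ∧
    (∫ x in a..b, ∫ t in a..b,
        (∑ k ∈ Finset.range n, t ^ k * x ^ (n - 1 - k)) * ρ t * ρ x) =
      ∑ k ∈ Finset.range n, c k * c (n - 1 - k) := by
  simp only [intervalIntegral.integral_of_le hab.le] at hc ⊢
  exact reducer_moments_general (volume.restrict (Ioc a b)) ρ n
    (hcont.integrableOn_Icc.mono_set Ioc_subset_Icc_self)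
    (((continuousOn_pow n).mul hcont).integrableOn_Icc.mono_set Ioc_subset_Icc_self) c hc
end

section
/- Let ρ be an integrable nonnegative probability density on [0,1] and define, for a real polynomial P, the polynomial T_ρ(P)(x) = ∫₀¹ (P(t)−P(x))/(t−x)·ρ(t) dt. Then for all real polynomials f and P: ∫₀¹ T_ρ(f·P)(t)·ρ(t) dt = ∫₀¹ T_ρ(f)(t)·P(t)·ρ(t) dt + ∫₀¹ f(t)·T_ρ(P)(t)·ρ(t) dt. (Formula (F) of Theorem 3.1 in the polynomial case.) -/
/-!
Let `L Q = ∫₀¹ Q(t) ρ(t) dt`, so that `T_ρ(P)(x)` is `L` applied to the divided difference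
`(P(t) - P(x)) / (t - x)` in the variable `t`. Both sides of the identity
`L (T (f * P)) = L (T f * P) + L (f * T P)` are bilinear in `f` and `P`, and on monomials they are
sums of products of moments: since `(tⁿ - xⁿ) / (t - x) = ∑_{i + j = n - 1} tⁱ xʲ`, the left-hand
side for `f = Xᵐ` and `P = Xⁿ` is the sum of `L(Xⁱ) L(Xʲ)` over `i + j = m + n - 1`. The terms with
`i < m` add up to `L (T f * P)`, those with `i ≥ m` to `L (f * T P)`.
-/

open MeasureTheory Filter Set Polynomial

/-- The operator creating secondary polynomials, acting on a real polynomial `P`: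
`T_ρ(P)(x) = ∫₀¹ (P(t)−P(x))/(t−x)·ρ(t) dt`, where the integrand is the polynomial
quotient `(P − P(x)) /ₘ (X − x)` evaluated at `t`. -/
noncomputable def secOp (ρ : ℝ → ℝ) (P : Polynomial ℝ) (x : ℝ) : ℝ :=
  ∫ t in (0 : ℝ)..1, ((P - C (P.eval x)) /ₘ (X - C x)).eval t * ρ t

section CommSemiring

variable {R : Type*} [CommSemiring R]

/-- The divided difference `(P - P(x)) / (X - x)` as a linear map in `P`, defined on monomials by
`Xⁿ ↦ ∑_{i < n} xⁿ⁻¹⁻ⁱ Xⁱ` so that it also makes sense over a semiring. -/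
noncomputable def dividedDifference (x : R) : R[X] →ₗ[R] R[X] :=
  (basisMonomials R).constr R fun n ↦ ∑ i ∈ Finset.range n, x ^ (n - 1 - i) • X ^ i

/-- The secondary polynomial operator of a linear functional `L` on polynomials: `L` is applied in
the variable `t` to `(P(t) - P(x)) / (t - x)`, which on monomials gives
`Xⁿ ↦ ∑_{i < n} L(Xⁱ) Xⁿ⁻¹⁻ⁱ`. The operator `T_ρ` is the case `L Q = ∫₀¹ Q(t) ρ(t) dt`. -/
noncomputable def secondaryPolynomial (L : R[X] →ₗ[R] R) : R[X] →ₗ[R] R[X] :=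
  (basisMonomials R).constr R fun n ↦ ∑ i ∈ Finset.range n, L (X ^ i) • X ^ (n - 1 - i)

lemma basisMonomials_constr_X_pow {M : Type*} [AddCommMonoid M] [Module R M] (v : ℕ → M) (n : ℕ) :
    (basisMonomials R).constr R v (X ^ n) = v n := by
  rw [X_pow_eq_monomial, ← congr_fun (coe_basisMonomials R) n, Module.Basis.constr_basis]

lemma dividedDifference_X_pow (x : R) (n : ℕ) :
    dividedDifference x (X ^ n) = ∑ i ∈ Finset.range n, x ^ (n - 1 - i) • X ^ i :=
  basisMonomials_constr_X_pow _ n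

lemma secondaryPolynomial_X_pow (L : R[X] →ₗ[R] R) (n : ℕ) :
    secondaryPolynomial L (X ^ n) = ∑ i ∈ Finset.range n, L (X ^ i) • X ^ (n - 1 - i) :=
  basisMonomials_constr_X_pow _ n

lemma eval_secondaryPolynomial (L : R[X] →ₗ[R] R) (P : R[X]) (x : R) :
    (secondaryPolynomial L P).eval x = L (dividedDifference x P) := by
  induction P using Polynomial.induction_on' with
  | add P Q hP hQ => simp only [map_add, eval_add, hP, hQ]
  | monomial n a =>
    simp only [← smul_X_eq_monomial, map_smul, eval_smul, secondaryPolynomial_X_pow,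
      dividedDifference_X_pow, eval_finsetSum, eval_X_pow, map_sum, smul_eq_mul, mul_comm]

lemma apply_secondaryPolynomial_X_pow_mul (L : R[X] →ₗ[R] R) (m n : ℕ) :
    L (secondaryPolynomial L (X ^ m * X ^ n)) =
      L (secondaryPolynomial L (X ^ m) * X ^ n) + L (X ^ m * secondaryPolynomial L (X ^ n)) := by
  have low_terms : L (secondaryPolynomial L (X ^ m) * X ^ n) =
      ∑ i ∈ Finset.range m, L (X ^ i) * L (X ^ (m + n - 1 - i)) := by
    simp only [secondaryPolynomial_X_pow, Finset.sum_mul, smul_mul_assoc, map_sum, map_smul,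
      smul_eq_mul, ← pow_add]
    refine Finset.sum_congr rfl fun i hi ↦ ?_
    have := Finset.mem_range.mp hi
    congr 3
    lia
  have high_terms : L (X ^ m * secondaryPolynomial L (X ^ n)) =
      ∑ i ∈ Finset.range n, L (X ^ (m + i)) * L (X ^ (m + n - 1 - (m + i))) := by
    rw [← Finset.sum_range_reflect]
    simp only [secondaryPolynomial_X_pow, Finset.mul_sum, mul_smul_comm, map_sum, map_smul,
      smul_eq_mul, ← pow_add]
    refine Finset.sum_congr rfl fun i hi ↦ ?_
    have := Finset.mem_range.mp hi
    rw [mul_comm]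
    congr 3
    lia
  rw [low_terms, high_terms, ← pow_add, secondaryPolynomial_X_pow, map_sum, ← Finset.sum_range_add]
  simp only [map_smul, smul_eq_mul]

theorem secOp_mul_formula_general (L : R[X] →ₗ[R] R) (f P : R[X]) :
    L (secondaryPolynomial L (f * P)) =
      L (secondaryPolynomial L f * P) + L (f * secondaryPolynomial L P) := by
  induction f using Polynomial.induction_on' with
  | add f g hf hg =>
    simp only [add_mul, map_add, hf, hg]
    abel
  | monomial m a =>
    induction P using Polynomial.induction_on' with
    | add P Q hP hQ =>
      simp only [mul_add, map_add, hP, hQ]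
      abel
    | monomial n b =>
      simp only [← smul_X_eq_monomial, smul_mul_assoc, mul_smul_comm, map_smul,
        apply_secondaryPolynomial_X_pow_mul, smul_add]

end CommSemiring

section CommRing

variable {R : Type*} [CommRing R]

lemma X_sub_C_mul_dividedDifference (x : R) (P : R[X]) :
    (X - C x) * dividedDifference x P = P - C (P.eval x) := by
  induction P using Polynomial.induction_on' with
  | add P Q hP hQ => rw [map_add, mul_add, hP, hQ, eval_add, C_add, add_sub_add_comm]
  | monomial n a =>
    have X_pow_case : (X - C x) * dividedDifference x (X ^ n) = X ^ n - C (x ^ n) := by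
      rw [dividedDifference_X_pow, mul_comm, C_pow, ← geom_sum₂_mul]
      simp only [smul_eq_C_mul, C_pow, mul_comm]
    rw [← smul_X_eq_monomial, map_smul, mul_smul_comm, X_pow_case, smul_sub, eval_smul,
      eval_X_pow, smul_C]

lemma sub_C_eval_divByMonic (P : R[X]) (x : R) :
    (P - C (P.eval x)) /ₘ (X - C x) = dividedDifference x P := by
  rw [← X_sub_C_mul_dividedDifference, mul_divByMonic_cancel_left _ (monic_X_sub_C x)]

end CommRing

/-- The functional `Q ↦ ∫ t in a..b, Q(t) ρ(t) ∂μ` on polynomials given by a weight `ρ`. -/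
noncomputable def weightedIntegral {ρ : ℝ → ℝ} {μ : Measure ℝ} {a b : ℝ}
    (hρ : IntervalIntegrable ρ μ a b) : ℝ[X] →ₗ[ℝ] ℝ where
  toFun Q := ∫ t in a..b, Q.eval t * ρ t ∂μ
  map_add' P Q := by
    simp only [eval_add, add_mul]
    exact intervalIntegral.integral_add (hρ.continuousOn_mul P.continuousOn)
      (hρ.continuousOn_mul Q.continuousOn)
  map_smul' c Q := by
    simp only [eval_smul, smul_eq_mul, mul_assoc, intervalIntegral.integral_const_mul,
      RingHom.id_apply]

lemma secOp_eq_eval_secondaryPolynomial {ρ : ℝ → ℝ} (hρ : IntervalIntegrable ρ volume 0 1)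
    (P : ℝ[X]) (x : ℝ) :
    secOp ρ P x = (secondaryPolynomial (weightedIntegral hρ) P).eval x := by
  rw [eval_secondaryPolynomial, ← sub_C_eval_divByMonic]
  rfl

/-- Formula (F) of Theorem 3.1 in the polynomial case: for an integrable nonnegative
probability density `ρ` on `[0,1]` and all real polynomials `f`, `P`:
`∫₀¹ T_ρ(f·P)(t)·ρ(t) dt = ∫₀¹ T_ρ(f)(t)·P(t)·ρ(t) dt + ∫₀¹ f(t)·T_ρ(P)(t)·ρ(t) dt`. -/
theorem secOp_mul_formula (ρ : ℝ → ℝ)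
    (hint : IntervalIntegrable ρ MeasureTheory.volume 0 1)
    (hnonneg : ∀ t ∈ Icc (0 : ℝ) 1, 0 ≤ ρ t)
    (hprob : (∫ t in (0 : ℝ)..1, ρ t) = 1)
    (f P : Polynomial ℝ) :
    (∫ t in (0 : ℝ)..1, secOp ρ (f * P) t * ρ t) =
      (∫ t in (0 : ℝ)..1, secOp ρ f t * P.eval t * ρ t) +
        ∫ t in (0 : ℝ)..1, f.eval t * secOp ρ P t * ρ t := by
  simp only [secOp_eq_eval_secondaryPolynomial hint, ← eval_mul]
  exact secOp_mul_formula_general (weightedIntegral hint) f P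
end

section
/- Let Pₙ(x) = (√(2n+1)/n!)·(dⁿ/dxⁿ)(xⁿ(1−x)ⁿ) be the normalized Legendre polynomials on [0,1], and let φ(x) = 2·ln(x/(1−x)) be the reducer of the Lebesgue measure on [0,1]. Then for every n ≥ 1, the Fourier coefficient Cₙ(φ) = ∫₀¹ φ(x)·Pₙ(x) dx equals 0 when n is even and equals −4·√(2n+1)/(n·(n+1)) when n is odd. -/
open MeasureTheory Filter Set

/-!
The logit `ℓ(x) = log (x / (1 - x))`, which is half the reducer, satisfies `x (1 - x) ℓ'(x) = 1`,
while the shifted Legendre polynomial `L = Lₙ` satisfies `(x (1 - x) L')' = -n (n + 1) L`. Since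
`x (1 - x) ℓ(x)` vanishes at both endpoints, integration by parts gives
`-n (n + 1) ∫₀¹ ℓ L = ∫₀¹ ℓ (x (1 - x) L')' = -∫₀¹ L' = L(0) - L(1) = 1 - (-1)ⁿ`.
-/

open Polynomial

theorem aeval_zero_shiftedLegendre {R : Type*} [Ring R] (n : ℕ) :
    aeval (0 : R) (shiftedLegendre n) = 1 := by
  simp [← coeff_zero_eq_aeval_zero', coeff_shiftedLegendre]

theorem aeval_one_shiftedLegendre {R : Type*} [Ring R] (n : ℕ) :
    aeval (1 : R) (shiftedLegendre n) = (-1) ^ n := by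
  rw [shiftedLegendre_eval_symm, sub_self, aeval_zero_shiftedLegendre, mul_one]

theorem coeff_succ_shiftedLegendre (n k : ℕ) :
    ((k : ℤ) + 1) ^ 2 * (shiftedLegendre n).coeff (k + 1) =
      -((n - k) * (n + k + 1)) * (shiftedLegendre n).coeff k := by
  have hlower : (n.choose (k + 1) : ℤ) * (k + 1) = n.choose k * (n - k) := by
    rcases le_or_gt k n with hk | hk
    · exact_mod_cast Nat.choose_succ_right_eq n k
    · simp [Nat.choose_eq_zero_of_lt hk, Nat.choose_eq_zero_of_lt (hk.trans k.lt_succ_self)]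
  have hupper : ((n + (k + 1)).choose n : ℤ) * (k + 1) = (n + k).choose n * (n + k + 1) := by
    have h := Nat.choose_mul_succ_eq (n + k) n
    rw [show n + k + 1 - n = k + 1 by lia] at h
    exact_mod_cast h.symm
  rw [coeff_shiftedLegendre, coeff_shiftedLegendre]
  linear_combination (-1) ^ (k + 1) * ((n + (k + 1)).choose n : ℤ) * (k + 1) * hlower +
    (-1) ^ (k + 1) * (n.choose k : ℤ) * (n - k) * hupper

theorem coeff_derivative_X_mul_one_sub_X_mul_derivative {R : Type*} [CommRing R] (p : R[X])
    (k : ℕ) :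
    (derivative (X * (1 - X) * derivative p)).coeff k =
      ((k : R) + 1) ^ 2 * p.coeff (k + 1) - k * (k + 1) * p.coeff k := by
  rw [coeff_derivative, mul_assoc, coeff_X_mul, sub_mul, one_mul, coeff_sub, coeff_derivative]
  cases k with
  | zero => simp
  | succ k =>
    rw [coeff_X_mul, coeff_derivative]
    push_cast
    ring

theorem derivative_X_mul_one_sub_X_mul_derivative_shiftedLegendre (n : ℕ) :
    derivative (X * (1 - X) * derivative (shiftedLegendre n)) =
      C (-(n * (n + 1) : ℤ)) * shiftedLegendre n := by
  ext k
  rw [coeff_derivative_X_mul_one_sub_X_mul_derivative, coeff_C_mul, coeff_succ_shiftedLegendre]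
  ring

theorem iteratedDeriv_aeval {R 𝕜 : Type*} [CommSemiring R] [NontriviallyNormedField 𝕜]
    [Algebra R 𝕜] (p : R[X]) (k : ℕ) :
    iteratedDeriv k (fun x : 𝕜 => aeval x p) = fun x => aeval x (derivative^[k] p) := by
  induction k with
  | zero => simp
  | succ k ih =>
    funext x
    rw [iteratedDeriv_succ, ih, Polynomial.deriv_aeval, Function.iterate_succ_apply']

theorem iteratedDeriv_pow_mul_one_sub_pow {𝕜 : Type*} [NontriviallyNormedField 𝕜]
    (n : ℕ) (x : 𝕜) :
    iteratedDeriv n (fun y : 𝕜 => y ^ n * (1 - y) ^ n) x =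
      n.factorial * aeval x (shiftedLegendre n) := by
  have haeval : (fun y : 𝕜 => y ^ n * (1 - y) ^ n) =
      fun y => aeval y ((X : ℤ[X]) ^ n * (1 - X) ^ n) := by
    simp
  rw [haeval, congrFun (iteratedDeriv_aeval _ _) x, ← factorial_mul_shiftedLegendre_eq,
    aeval_mul, aeval_natCast]

/-- The log-odds function, half the reducer of Lebesgue measure on `[0, 1]`. It is unbounded near
`0` and `1`, but takes the junk value `0` at these two points. -/
noncomputable def logit (x : ℝ) : ℝ := Real.log (x / (1 - x))

theorem logit_eq_log_sub_log (x : ℝ) : logit x = Real.log x - Real.log (1 - x) := by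
  rcases eq_or_ne x 0 with rfl | hx₀
  · simp [logit]
  rcases eq_or_ne x 1 with rfl | hx₁
  · simp [logit]
  exact Real.log_div hx₀ (sub_ne_zero.2 hx₁.symm)

theorem hasDerivAt_logit {x : ℝ} (hx₀ : x ≠ 0) (hx₁ : x ≠ 1) :
    HasDerivAt logit (1 / (x * (1 - x))) x := by
  have hx₁' : 1 - x ≠ 0 := sub_ne_zero.2 hx₁.symm
  rw [funext logit_eq_log_sub_log]
  refine ((Real.hasDerivAt_log hx₀).sub
    (((hasDerivAt_id x).const_sub 1).log hx₁')).congr_deriv ?_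
  simp only [id]
  field_simp
  ring

theorem continuous_mul_one_sub_mul_logit : Continuous fun x : ℝ => x * (1 - x) * logit x := by
  have hsplit : (fun x : ℝ => x * (1 - x) * logit x) =
      fun x => x * Real.negMulLog (1 - x) - (1 - x) * Real.negMulLog x := by
    funext x
    rw [logit_eq_log_sub_log, Real.negMulLog, Real.negMulLog]
    ring
  rw [hsplit]
  fun_prop

theorem intervalIntegrable_logit {a b : ℝ} : IntervalIntegrable logit volume a b := by
  have hlog_one_sub : IntervalIntegrable (fun x => Real.log (1 - x)) volume a b := by
    simpa using (intervalIntegral.intervalIntegrable_log' (a := 1 - a) (b := 1 - b)).comp_sub_left 1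
  rw [funext logit_eq_log_sub_log]
  exact intervalIntegral.intervalIntegrable_log'.sub hlog_one_sub

theorem integral_logit_mul_of_hasDerivAt {f f' g : ℝ → ℝ}
    (hf : ContinuousOn f (Icc 0 1)) (hf' : ContinuousOn f' (Icc 0 1))
    (hg : ContinuousOn g (Icc 0 1))
    (hderiv_f : ∀ x ∈ Ioo (0 : ℝ) 1, HasDerivAt f (f' x) x)
    (hderiv_f' : ∀ x ∈ Ioo (0 : ℝ) 1, HasDerivAt (fun y => y * (1 - y) * f' y) (g x) x) :
    ∫ x in (0 : ℝ)..1, logit x * g x = f 0 - f 1 := by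
  have hcont : ContinuousOn (fun x => x * (1 - x) * logit x * f' x - f x) (Icc 0 1) :=
    (continuous_mul_one_sub_mul_logit.continuousOn.mul hf').sub hf
  have hderiv : ∀ x ∈ Ioo (0 : ℝ) 1,
      HasDerivAt (fun y => y * (1 - y) * logit y * f' y - f y) (logit x * g x) x := by
    intro x hx
    have hx₀ : x ≠ 0 := hx.1.ne'
    have hx₁ : 1 - x ≠ 0 := (sub_pos.2 hx.2).ne'
    have h := ((hasDerivAt_logit hx₀ hx.2.ne).mul (hderiv_f' x hx)).sub (hderiv_f x hx)
    refine (h.congr_deriv ?_).congr_of_eventuallyEq (.of_eq ?_)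
    · field_simp
      ring
    · funext y
      simp only [Pi.sub_apply, Pi.mul_apply]
      ring
  have hintegrable : IntervalIntegrable (fun x => logit x * g x) volume 0 1 :=
    intervalIntegrable_logit.mul_continuousOn (by rwa [uIcc_of_le zero_le_one])
  rw [intervalIntegral.integral_eq_sub_of_hasDerivAt_of_le zero_le_one hcont hderiv hintegrable]
  ring

theorem integral_logit_mul_aeval_derivative {R : Type*} [CommRing R] [Algebra R ℝ] (p : R[X]) :
    ∫ x in (0 : ℝ)..1, logit x * aeval x (derivative (X * (1 - X) * derivative p)) =
      aeval (0 : ℝ) p - aeval (1 : ℝ) p := by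
  have haeval : (fun x : ℝ => x * (1 - x) * aeval x (derivative p)) =
      fun x => aeval x (X * (1 - X) * derivative p) := by
    simp
  refine integral_logit_mul_of_hasDerivAt (f := fun x => aeval x p)
    (f' := fun x => aeval x (derivative p)) p.continuousOn_aeval
    (derivative p).continuousOn_aeval (Polynomial.continuousOn_aeval _)
    (fun x _ => p.hasDerivAt_aeval x) (fun x _ => ?_)
  rw [haeval]
  exact (X * (1 - X) * derivative p).hasDerivAt_aeval x

theorem integral_logit_mul_aeval_shiftedLegendre {n : ℕ} (hn : n ≠ 0) :
    ∫ x in (0 : ℝ)..1, logit x * aeval x (shiftedLegendre n) =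
      ((-1) ^ n - 1) / (n * (n + 1)) := by
  have heigen : -((n : ℝ) * (n + 1)) *
      ∫ x in (0 : ℝ)..1, logit x * aeval x (shiftedLegendre n) = 1 - (-1) ^ n :=
    calc
      _ = ∫ x in (0 : ℝ)..1,
          logit x * aeval x (derivative (X * (1 - X) * derivative (shiftedLegendre n))) := by
        rw [← intervalIntegral.integral_const_mul]
        congr with x
        rw [derivative_X_mul_one_sub_X_mul_derivative_shiftedLegendre, aeval_mul, aeval_C]
        push_cast
        ring
      _ = 1 - (-1) ^ n := by
        rw [integral_logit_mul_aeval_derivative, aeval_zero_shiftedLegendre,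
          aeval_one_shiftedLegendre]
  rw [eq_div_iff (by positivity)]
  linear_combination -heigen

/-- Fourier coefficients of the reducer `φ(x) = 2·ln(x/(1−x))` of the Lebesgue measure
on `[0,1]` in the normalized Legendre system
`Pₙ(x) = (√(2n+1)/n!)·(dⁿ/dxⁿ)(xⁿ(1−x)ⁿ)`: for `n ≥ 1`,
`Cₙ(φ) = ∫₀¹ φ·Pₙ` vanishes for even `n` and equals `−4√(2n+1)/(n(n+1))` for odd `n`. -/
theorem fourier_coefficients_reducer_legendre
    (P : ℕ → ℝ → ℝ)
    (hP : ∀ n x, P n x =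
      (Real.sqrt (2 * (n : ℝ) + 1) / (Nat.factorial n : ℝ)) *
        iteratedDeriv n (fun y : ℝ => y ^ n * (1 - y) ^ n) x)
    (φ : ℝ → ℝ) (hφ : ∀ x, φ x = 2 * Real.log (x / (1 - x)))
    (n : ℕ) (hn : 1 ≤ n) :
    (Even n → (∫ x in (0 : ℝ)..1, φ x * P n x) = 0) ∧
    (Odd n → (∫ x in (0 : ℝ)..1, φ x * P n x) =
      -4 * Real.sqrt (2 * (n : ℝ) + 1) / ((n : ℝ) * ((n : ℝ) + 1))) := by
  have hintegrand : ∀ x, φ x * P n x =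
      2 * Real.sqrt (2 * n + 1) * (logit x * aeval x (shiftedLegendre n)) := by
    intro x
    rw [hφ, hP, iteratedDeriv_pow_mul_one_sub_pow, logit]
    field_simp
  have hcoeff : ∫ x in (0 : ℝ)..1, φ x * P n x =
      2 * Real.sqrt (2 * n + 1) * (((-1) ^ n - 1) / (n * (n + 1))) := by
    simp_rw [hintegrand, intervalIntegral.integral_const_mul]
    rw [integral_logit_mul_aeval_shiftedLegendre (Nat.one_le_iff_ne_zero.1 hn)]
  rw [hcoeff]
  constructor
  · intro heven
    rw [heven.neg_one_pow, sub_self, zero_div, mul_zero]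
  · intro hodd
    rw [hodd.neg_one_pow]
    ring
end

section
/- For every natural number n ≥ 1: (1/n)·Σ_{k=0}^{n−1} 1/binom(n−1,k) = (1/2ⁿ)·Σ_{k=1}^{n} 2ᵏ/k. That is, the row sums sₙ of the reciprocals of binomial coefficients satisfy sₙ = Gₙ/2ⁿ where Gₙ = Σ_{k=1}^{n} 2ᵏ/k is the n-th 'geoharmonic' number. -/
open Finset

/-!
Each entry of the Leibniz harmonic triangle is the sum of the two entries below it. Adding this up
along a row counts every entry of the next row twice, except for its two ends, which are counted
once. Hence twice the sum of a row is the sum of the previous row plus the two ends `1 / n`, so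
that `2 ^ n * sₙ` increases by exactly `2 ^ n / n` at the `n`-th step, as `Gₙ` does.
-/

section LeibnizTriangle

variable (K : Type*) [Semifield K]

/-- The entry in row `n` and column `k` of the Leibniz harmonic triangle. Both are counted from `0`,
so the row called `n` in the notation `sₙ` is row `n - 1` here; the value for `n < k` is `0`. -/
def leibnizTriangle (n k : ℕ) : K := 1 / ((n + 1) * n.choose k)

/-- The sum of row `n` of the Leibniz harmonic triangle, with rows counted from `0`: this is
`sₙ₊₁`. -/
def leibnizRowSum (n : ℕ) : K := ∑ k ∈ range (n + 1), leibnizTriangle K n k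

/-- The geoharmonic number `Gₙ`. -/
def geoharmonic (n : ℕ) : K := ∑ k ∈ Icc 1 n, 2 ^ k / (k : K)

lemma leibnizTriangle_zero_right (n : ℕ) : leibnizTriangle K n 0 = 1 / (n + 1) := by
  simp [leibnizTriangle]

lemma leibnizTriangle_self (n : ℕ) : leibnizTriangle K n n = 1 / (n + 1) := by
  simp [leibnizTriangle]

lemma leibnizRowSum_eq_mul_sum (n : ℕ) :
    leibnizRowSum K n = 1 / (n + 1) * ∑ k ∈ range (n + 1), 1 / (n.choose k : K) := by
  simp only [leibnizRowSum, leibnizTriangle, mul_sum, one_div_mul_one_div]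

lemma geoharmonic_succ (n : ℕ) :
    geoharmonic K (n + 1) = geoharmonic K n + 2 ^ (n + 1) / (n + 1) := by
  simp [geoharmonic, sum_Icc_succ_top]

variable [CharZero K]

lemma leibnizTriangle_succ_succ (n k : ℕ) :
    leibnizTriangle K (n + 1) (k + 1) = (k + 1) / (n + 2) * leibnizTriangle K n k := by
  have absorb : (n + 1 : K) * n.choose k = (n + 1).choose (k + 1) * (k + 1) :=
    mod_cast Nat.add_one_mul_choose_eq n k
  have hk : (k + 1 : K) ≠ 0 := k.cast_add_one_ne_zero
  rw [leibnizTriangle, leibnizTriangle, absorb]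
  push_cast
  field_simp
  ring

lemma leibnizTriangle_succ_left {n k : ℕ} (hk : k ≤ n) :
    leibnizTriangle K (n + 1) k = (n - k + 1 : ℕ) / (n + 2) * leibnizTriangle K n k := by
  have absorb : (n + 1 : K) * n.choose k = (n + 1).choose k * (n - k + 1 : ℕ) := by
    rw [← Nat.sub_add_comm hk, mul_comm]
    exact mod_cast Nat.choose_mul_succ_eq n k
  have hnk : ((n - k + 1 : ℕ) : K) ≠ 0 := Nat.cast_ne_zero.mpr (Nat.succ_ne_zero _)
  rw [leibnizTriangle, leibnizTriangle, absorb]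
  push_cast at hnk ⊢
  field_simp
  ring

lemma leibnizTriangle_succ_add_succ {n k : ℕ} (hk : k ≤ n) :
    leibnizTriangle K (n + 1) k + leibnizTriangle K (n + 1) (k + 1) = leibnizTriangle K n k := by
  have weights : ((n - k + 1 : ℕ) : K) + (k + 1) = n + 2 := by
    norm_cast
    omega
  have hn : (n + 2 : K) ≠ 0 := by exact_mod_cast (n + 1).succ_ne_zero
  rw [leibnizTriangle_succ_left K hk, leibnizTriangle_succ_succ, ← add_mul, ← add_div, weights,
    div_self hn, one_mul]

lemma two_mul_leibnizRowSum_succ (n : ℕ) :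
    2 * leibnizRowSum K (n + 1) = leibnizRowSum K n + 2 / (n + 2) := by
  have drop_last : leibnizRowSum K (n + 1) =
      ∑ k ∈ range (n + 1), leibnizTriangle K (n + 1) k + 1 / (n + 2) := by
    rw [leibnizRowSum, sum_range_succ, leibnizTriangle_self, Nat.cast_succ, add_assoc,
      one_add_one_eq_two]
  have drop_first : leibnizRowSum K (n + 1) =
      ∑ k ∈ range (n + 1), leibnizTriangle K (n + 1) (k + 1) + 1 / (n + 2) := by
    rw [leibnizRowSum, sum_range_succ', leibnizTriangle_zero_right, Nat.cast_succ, add_assoc,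
      one_add_one_eq_two]
  calc 2 * leibnizRowSum K (n + 1)
    _ = ∑ k ∈ range (n + 1), (leibnizTriangle K (n + 1) k + leibnizTriangle K (n + 1) (k + 1))
          + 2 / (n + 2) := by
      rw [two_mul]
      nth_rw 1 [drop_last]
      rw [drop_first, sum_add_distrib]
      ring
    _ = leibnizRowSum K n + 2 / (n + 2) := by
      rw [leibnizRowSum, sum_congr rfl fun k hk ↦
        leibnizTriangle_succ_add_succ K (mem_range_succ_iff.mp hk)]

lemma two_pow_mul_leibnizRowSum (n : ℕ) :
    2 ^ (n + 1) * leibnizRowSum K n = geoharmonic K (n + 1) := by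
  induction n with
  | zero => simp [leibnizRowSum, leibnizTriangle, geoharmonic]
  | succ n ih =>
    calc 2 ^ (n + 2) * leibnizRowSum K (n + 1)
      _ = 2 ^ (n + 1) * (2 * leibnizRowSum K (n + 1)) := by ring
      _ = 2 ^ (n + 1) * leibnizRowSum K n + 2 ^ (n + 2) / (n + 2) := by
        rw [two_mul_leibnizRowSum_succ]
        ring
      _ = geoharmonic K (n + 2) := by
        rw [ih, geoharmonic_succ K (n + 1), Nat.cast_succ, add_assoc (n : K), one_add_one_eq_two]

theorem leibniz_row_sum_eq_geoharmonic_general (n : ℕ) (hn : 1 ≤ n) :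
    (1 / (n : K)) * ∑ k ∈ range n, 1 / ((n - 1).choose k : K) =
      (1 / 2 ^ n) * ∑ k ∈ Icc 1 n, (2 : K) ^ k / (k : K) := by
  obtain ⟨m, rfl⟩ := Nat.exists_eq_add_of_le' hn
  calc 1 / ((m + 1 : ℕ) : K) * ∑ k ∈ range (m + 1), 1 / (m.choose k : K)
    _ = leibnizRowSum K m := by rw [leibnizRowSum_eq_mul_sum, Nat.cast_succ]
    _ = 1 / 2 ^ (m + 1) * geoharmonic K (m + 1) := by
      rw [← two_pow_mul_leibnizRowSum, one_div, inv_mul_cancel_left₀ (pow_ne_zero _ two_ne_zero)]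

end LeibnizTriangle

/-- Row sums of the Leibniz harmonic triangle: for every `n ≥ 1`,
`(1/n)·Σ_{k=0}^{n−1} 1/binom(n−1,k) = (1/2ⁿ)·Σ_{k=1}^{n} 2ᵏ/k`, i.e. `sₙ = Gₙ/2ⁿ`
where `Gₙ` is the n-th 'geoharmonic' number. -/
theorem leibniz_row_sum_eq_geoharmonic (n : ℕ) (hn : 1 ≤ n) :
    (1 / (n : ℝ)) * ∑ k ∈ Finset.range n, 1 / (Nat.choose (n - 1) k : ℝ) =
      (1 / 2 ^ n) * ∑ k ∈ Finset.Icc 1 n, (2 : ℝ) ^ k / (k : ℝ) :=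
  leibniz_row_sum_eq_geoharmonic_general ℝ n hn
end

section
/- With Gₙ = Σ_{k=1}^{n} 2ᵏ/k, the series Σ_{n=1}^{∞} Gₙ²/4ⁿ converges and its sum equals 4π²/9. (Equivalently, Σ_{n=1}^{∞} sₙ² = 4π²/9 where sₙ = (1/n)·Σ_{k=0}^{n−1} 1/binom(n−1,k); this is the value of ∫₀^∞ 4·Ei(x)²·e^{−3x} dx obtained from the norm identity ‖φ‖²_ρ = (4π²/3)·‖ρ‖²_ρ for the exponential density.) -/
open Finset

/-!
The numbers `sₙ = Gₙ / 2ⁿ` satisfy `sₙ₊₁ = sₙ / 2 + 1 / (n + 1)`. Squaring,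
`sₙ₊₁² = sₙ² / 4 + (sₙ / (n + 1) + 1 / (n + 1)²)`, and summing over `n` gives
`(3 / 4) ∑ sₙ² = ∑ sₙ / (n + 1) + ζ(2)`. Unrolling the recurrence and summing the resulting double
series along its other index yields `∑ sₙ / (n + 1) = ∑ₘ 2⁻ᵐ Hₘ₊₁ / (m + 1)`, which is twice the
Euler transform of the alternating series `∑ (-1)ⁿ / (n + 1)² = π² / 12`.
-/

section Rearrangement

theorem hasSum_sum_antidiagonal {A E : Type*} [AddMonoid A] [HasAntidiagonal A]
    [AddCommMonoid E] [TopologicalSpace E] [ContinuousAdd E] [T3Space E]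
    {f : A × A → E} {g : A → E} {a : E} (hf : Summable f)
    (hrow : ∀ i, HasSum (fun j ↦ f (i, j)) (g i)) (hg : HasSum g a) :
    HasSum (fun n ↦ ∑ p ∈ antidiagonal n, f p) a := by
  have hfa : HasSum f a := (hf.hasSum.prod_fiberwise hrow).unique hg ▸ hf.hasSum
  have hsigma := HasAntidiagonal.sigmaAntidiagonalEquivProd.hasSum_iff.mpr hfa
  refine (hsigma.sigma fun n ↦ hasSum_fintype _).congr_fun fun n ↦ ?_
  exact (sum_coe_sort _ f).symm

theorem hasSum_euler_transform {E : Type*} [NormedAddCommGroup E] [NormedSpace ℝ E]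
    [CompleteSpace E] {a : ℕ → E} (ha : Summable fun n ↦ ‖a n‖) :
    HasSum (fun n ↦ (1 / 2 : ℝ) ^ (n + 1) • ∑ i ∈ range (n + 1), (n.choose i : ℝ) • a i)
      (∑' n, a n) := by
  let w (p : ℕ × ℕ) : ℝ := (1 / 2) ^ (p.1 + p.2 + 1) * (p.1 + p.2).choose p.1
  have hw (i : ℕ) : HasSum (fun j ↦ w (i, j)) 1 := by
    have h := (hasSum_choose_mul_geometric_of_norm_lt_one i
      (r := (1 / 2 : ℝ)) (by norm_num)).mul_left ((1 / 2) ^ (i + 1))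
    convert! h using 1
    · ext j
      simp only [w, add_comm j i]
      ring
    · field_simp
      norm_num
  have hsum : Summable fun p : ℕ × ℕ ↦ w p • a p.1 := by
    refine .of_norm ?_
    have hrow (i : ℕ) : HasSum (fun j ↦ ‖w (i, j) • a i‖) ‖a i‖ := by
      simpa [norm_smul, w] using (hw i).mul_right ‖a i‖
    refine (summable_prod_of_nonneg fun _ ↦ norm_nonneg _).mpr ⟨fun i ↦ (hrow i).summable, ?_⟩
    simpa only [(hrow _).tsum_eq] using ha
  have hrow (i : ℕ) : HasSum (fun j ↦ w (i, j) • a i) (a i) := by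
    simpa using (hw i).smul_const (a i)
  refine (hasSum_sum_antidiagonal hsum hrow ha.of_norm.hasSum).congr_fun fun n ↦ ?_
  rw [← Nat.sum_antidiagonal_eq_sum_range_succ_mk (fun p ↦ (n.choose p.1 : ℝ) • a p.1) n, smul_sum]
  refine sum_congr rfl fun p hp ↦ ?_
  simp only [w, mem_antidiagonal.mp hp, mul_smul]

end Rearrangement

section LinearRecurrence

theorem eq_sum_antidiagonal_of_linear_recurrence {R : Type*} [Semiring R] {u v : ℕ → R} {c : R}
    (hu : ∀ n, u (n + 1) = c * u n + v n) (n : ℕ) :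
    u (n + 1) = c ^ (n + 1) * u 0 + ∑ p ∈ antidiagonal n, c ^ p.1 * v p.2 := by
  induction n with
  | zero => simp [hu]
  | succ n ih =>
    rw [hu, ih, Nat.sum_antidiagonal_succ, mul_add, mul_sum]
    simp only [pow_succ', mul_assoc, pow_zero, one_mul]
    abel

theorem hasSum_succ_of_linear_recurrence {𝕜 : Type*} [NormedField 𝕜] [CompleteSpace 𝕜]
    {u v : ℕ → 𝕜} {c : 𝕜} (hc : ‖c‖ < 1) (hu : ∀ n, u (n + 1) = c * u n + v n)
    (hv : Summable fun n ↦ ‖v n‖) :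
    HasSum (fun n ↦ u (n + 1)) ((c * u 0 + ∑' n, v n) / (1 - c)) := by
  have hgeom := hasSum_geometric_of_norm_lt_one hc
  have hconv : HasSum (fun n ↦ ∑ p ∈ antidiagonal n, c ^ p.1 * v p.2)
      ((1 - c)⁻¹ * ∑' n, v n) :=
    hasSum_sum_antidiagonal
      (summable_mul_of_summable_norm (summable_norm_geometric_of_norm_lt_one hc) hv)
      (fun i ↦ hv.of_norm.hasSum.mul_left (c ^ i)) (hgeom.mul_right _)
  have hinit : HasSum (fun n ↦ c ^ (n + 1) * u 0) ((1 - c)⁻¹ * (c * u 0)) := by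
    simpa only [pow_succ, mul_assoc] using hgeom.mul_right (c * u 0)
  rw [div_eq_inv_mul, mul_add]
  exact (hinit.add hconv).congr_fun (eq_sum_antidiagonal_of_linear_recurrence hu)

end LinearRecurrence

section Harmonic

open Filter Topology

variable {K : Type*} [Field K] [CharZero K]

theorem choose_div_add_one (n i : ℕ) :
    (n.choose i : K) / (i + 1) = (n + 1).choose (i + 1) / (n + 1) := by
  rw [div_eq_div_iff i.cast_add_one_ne_zero n.cast_add_one_ne_zero, mul_comm]
  exact_mod_cast Nat.add_one_mul_choose_eq n i

theorem sum_neg_one_pow_mul_choose_div_add_one (n : ℕ) :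
    ∑ i ∈ range (n + 1), (-1 : K) ^ i * (n.choose i / (i + 1)) = 1 / (n + 1) := by
  have halt : ∑ i ∈ range (n + 2), (-1 : K) ^ i * (n + 1).choose i = 0 := by
    exact_mod_cast congrArg (Int.cast : ℤ → K)
      (Int.alternating_sum_range_choose_of_ne n.succ_ne_zero)
  rw [sum_range_succ'] at halt
  simp only [pow_succ, mul_neg_one, neg_mul, sum_neg_distrib, pow_zero, Nat.choose_zero_right,
    Nat.cast_one, mul_one] at halt
  simp only [choose_div_add_one, ← mul_div_assoc, ← sum_div]
  congr 1
  linear_combination -halt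

theorem sum_neg_one_pow_mul_choose_add_one_div (n : ℕ) :
    ∑ i ∈ range n, (-1 : K) ^ i * (n.choose (i + 1) / (i + 1)) = harmonic n := by
  induction n with
  | zero => simp
  | succ n ih =>
    have htop : ∑ i ∈ range (n + 1), (-1 : K) ^ i * (n.choose (i + 1) / (i + 1)) =
        harmonic n := by
      simp [sum_range_succ, ih]
    simp only [Nat.choose_succ_succ', Nat.cast_add, add_div, mul_add, sum_add_distrib,
      sum_neg_one_pow_mul_choose_div_add_one, htop, harmonic_succ]
    push_cast
    ring

theorem sum_neg_one_pow_mul_choose_div_add_one_sq (n : ℕ) :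
    ∑ i ∈ range (n + 1), (-1 : K) ^ i * (n.choose i / (i + 1) ^ 2) =
      (harmonic (n + 1) : K) / (n + 1) := by
  rw [← sum_neg_one_pow_mul_choose_add_one_div, sum_div]
  refine sum_congr rfl fun i _ ↦ ?_
  rw [sq, ← div_div, choose_div_add_one]
  ring

theorem hasSum_sub_add_of_antitone {f : ℕ → ℝ} (hf : Antitone f)
    (hlim : Tendsto f atTop (𝓝 0)) (d : ℕ) :
    HasSum (fun k ↦ f k - f (k + d)) (∑ i ∈ range d, f i) := by
  rw [hasSum_iff_tendsto_nat_of_nonneg fun k ↦ sub_nonneg.mpr (hf (k.le_add_right d))]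
  have hpartial (N : ℕ) : ∑ k ∈ range N, (f k - f (k + d)) =
      ∑ i ∈ range d, f i - ∑ i ∈ range d, f (N + i) := by
    have h₁ := sum_range_add f N d
    have h₂ := sum_range_add f d N
    simp only [add_comm d] at h₂
    rw [sum_sub_distrib]
    linarith
  have htail : Tendsto (fun N ↦ ∑ i ∈ range d, f (N + i)) atTop (𝓝 0) := by
    simpa using tendsto_finsetSum (range d)
      fun i _ ↦ (tendsto_add_atTop_iff_nat i).mpr hlim
  simpa [hpartial] using htail.const_sub (∑ i ∈ range d, f i)

theorem hasSum_one_div_mul_add {d : ℕ} (hd : d ≠ 0) :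
    HasSum (fun k : ℕ ↦ 1 / (((k : ℝ) + 1) * (k + 1 + d))) (harmonic d / d) := by
  have hanti : Antitone fun k : ℕ ↦ 1 / ((k : ℝ) + 1) := fun _ _ h ↦
    Nat.one_div_le_one_div h
  have h := (hasSum_sub_add_of_antitone hanti
    tendsto_one_div_add_atTop_nhds_zero_nat d).div_const (d : ℝ)
  convert! h using 1
  · ext k
    push_cast
    field_simp
    ring
  · simp [harmonic]

end Harmonic

section ZetaTwo

theorem hasSum_one_div_add_one_sq :
    HasSum (fun n : ℕ ↦ 1 / ((n : ℝ) + 1) ^ 2) (Real.pi ^ 2 / 6) := by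
  simpa using (hasSum_nat_add_iff' 1).mpr hasSum_zeta_two

theorem hasSum_neg_one_pow_div_add_one_sq :
    HasSum (fun n : ℕ ↦ (-1 : ℝ) ^ n / ((n : ℝ) + 1) ^ 2) (Real.pi ^ 2 / 12) := by
  have hcos := hasSum_one_div_nat_pow_mul_cos one_ne_zero (x := 2⁻¹) (by norm_num)
  have hbernoulli : (Polynomial.map (algebraMap ℚ ℝ) (Polynomial.bernoulli 2)).eval 2⁻¹ =
      -1 / 12 := by
    refine (bernoulliFun_eval_half 2).trans ?_
    rw [bernoulli_eq_bernoulli'_of_ne_one (by decide), bernoulli'_two]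
    norm_num
  have hshift := ((hasSum_nat_add_iff' 1).mpr hcos).neg
  convert! hshift using 1
  · ext n
    rw [show 2 * Real.pi * ((n + 1 : ℕ) : ℝ) * 2⁻¹ = (n + 1 : ℕ) * Real.pi by ring,
      Real.cos_nat_mul_pi]
    push_cast
    ring
  · simp only [mul_one, hbernoulli]
    norm_num
    ring

theorem hasSum_harmonic_div_two_pow :
    HasSum (fun n : ℕ ↦ (1 / 2 : ℝ) ^ n * (harmonic (n + 1) / (n + 1 : ℕ)))
      (Real.pi ^ 2 / 6) := by
  have hnorm : Summable fun n : ℕ ↦ ‖(-1 : ℝ) ^ n / ((n : ℝ) + 1) ^ 2‖ := by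
    simpa using hasSum_one_div_add_one_sq.summable
  have h := (hasSum_euler_transform hnorm).mul_left 2
  rw [hasSum_neg_one_pow_div_add_one_sq.tsum_eq] at h
  convert! h using 1
  · ext n
    have hterm (i : ℕ) : (n.choose i : ℝ) • ((-1 : ℝ) ^ i / ((i : ℝ) + 1) ^ 2) =
        (-1) ^ i * (n.choose i / (i + 1) ^ 2) := mul_div_left_comm ..
    simp only [hterm, sum_neg_one_pow_mul_choose_div_add_one_sq, smul_eq_mul]
    push_cast
    ring
  · ring

end ZetaTwo

section Geoharmonic

/-- The normalized geoharmonic number `sₙ = Gₙ / 2ⁿ`, where `Gₙ = ∑ 2ᵏ / k` over `1 ≤ k ≤ n`; its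
squares are the terms of the series to be summed. -/
noncomputable def normalizedGeoharmonic (n : ℕ) : ℝ :=
  (∑ k ∈ Icc 1 n, (2 : ℝ) ^ k / k) / 2 ^ n

theorem normalizedGeoharmonic_zero : normalizedGeoharmonic 0 = 0 := by
  simp [normalizedGeoharmonic]

theorem normalizedGeoharmonic_succ (n : ℕ) :
    normalizedGeoharmonic (n + 1) = 1 / 2 * normalizedGeoharmonic n + 1 / (n + 1) := by
  rw [normalizedGeoharmonic, normalizedGeoharmonic, sum_Icc_succ_top (by lia), pow_succ]
  push_cast
  field_simp

theorem normalizedGeoharmonic_succ_eq_sum_antidiagonal (n : ℕ) :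
    normalizedGeoharmonic (n + 1) =
      ∑ p ∈ antidiagonal n, (1 / 2 : ℝ) ^ p.1 * (1 / (p.2 + 1)) := by
  simpa only [normalizedGeoharmonic_zero, mul_zero, zero_add] using
    eq_sum_antidiagonal_of_linear_recurrence normalizedGeoharmonic_succ n

theorem hasSum_normalizedGeoharmonic_div_add_one :
    HasSum (fun n : ℕ ↦ normalizedGeoharmonic n / (n + 1)) (Real.pi ^ 2 / 6) := by
  let f (p : ℕ × ℕ) : ℝ := (1 / 2) ^ p.1 * (1 / ((p.2 + 1) * (p.2 + 1 + (p.1 + 1 : ℕ))))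
  have hrow (m : ℕ) : HasSum (fun k ↦ f (m, k))
      ((1 / 2) ^ m * (harmonic (m + 1) / (m + 1 : ℕ))) :=
    (hasSum_one_div_mul_add m.succ_ne_zero).mul_left _
  have hf : Summable f := by
    refine (summable_prod_of_nonneg fun p ↦ by dsimp only [f, Pi.zero_apply]; positivity).mpr
      ⟨fun m ↦ (hrow m).summable, ?_⟩
    simpa only [(hrow _).tsum_eq] using hasSum_harmonic_div_two_pow.summable
  have hshift : HasSum (fun n : ℕ ↦ normalizedGeoharmonic (n + 1) / ((n + 1 : ℕ) + 1))
      (Real.pi ^ 2 / 6) := by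
    refine (hasSum_sum_antidiagonal hf hrow hasSum_harmonic_div_two_pow).congr_fun fun n ↦ ?_
    rw [normalizedGeoharmonic_succ_eq_sum_antidiagonal, sum_div]
    refine sum_congr rfl fun p hp ↦ ?_
    rw [← mem_antidiagonal.mp hp]
    simp only [f]
    push_cast
    field_simp
    ring
  rw [← hasSum_nat_add_iff' 1]
  simpa [normalizedGeoharmonic_zero] using hshift

theorem normalizedGeoharmonic_succ_sq (n : ℕ) :
    normalizedGeoharmonic (n + 1) ^ 2 = 1 / 4 * normalizedGeoharmonic n ^ 2 +
      (normalizedGeoharmonic n / (n + 1) + 1 / ((n : ℝ) + 1) ^ 2) := by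
  rw [normalizedGeoharmonic_succ, ← one_div_pow]
  ring

theorem hasSum_normalizedGeoharmonic_succ_sq :
    HasSum (fun n ↦ normalizedGeoharmonic (n + 1) ^ 2) (4 * Real.pi ^ 2 / 9) := by
  have hcross := hasSum_normalizedGeoharmonic_div_add_one.add hasSum_one_div_add_one_sq
  have hnorm : ‖(1 / 4 : ℝ)‖ < 1 := by norm_num
  convert! hasSum_succ_of_linear_recurrence (u := (normalizedGeoharmonic · ^ 2)) hnorm
    normalizedGeoharmonic_succ_sq hcross.summable.norm using 1
  rw [hcross.tsum_eq, normalizedGeoharmonic_zero]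
  ring

end Geoharmonic

/-- With `Gₙ = Σ_{k=1}^{n} 2ᵏ/k` the 'geoharmonic' numbers, the series
`Σ_{n=1}^{∞} Gₙ²/4ⁿ` converges with sum `4π²/9`. -/
theorem geoharmonic_square_series
    (G : ℕ → ℝ) (hG : ∀ n, G n = ∑ k ∈ Finset.Icc 1 n, (2 : ℝ) ^ k / (k : ℝ)) :
    HasSum (fun n : ℕ => (G (n + 1)) ^ 2 / 4 ^ (n + 1)) (4 * Real.pi ^ 2 / 9) := by
  refine hasSum_normalizedGeoharmonic_succ_sq.congr_fun fun n ↦ ?_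
  rw [normalizedGeoharmonic, ← hG, div_pow, pow_right_comm]
  norm_num
end

section
/- With Gₙ = Σ_{k=1}^{n} 2ᵏ/k, for every real x with |x| < 1/2 the series Σ_{n=1}^{∞} Gₙ·xⁿ converges and its sum equals ln(1−2x)/(x−1). -/
open Finset

/-!
Multiplying a power series by the geometric series `(1 - x)⁻¹ = ∑ xⁿ` replaces its coefficients by
their partial sums. Applied to `-log (1 - r * x) = ∑ rᵏ / k * xᵏ`, this gives the partial sums of
`rᵏ / k` as coefficients.
-/

open scoped Ring

theorem hasSum_sum_range_mul_pow_add {R : Type*} [NormedRing R] [HasSummableGeomSeries R]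
    {a : ℕ → R} {x s : R} {m : ℕ} (hx : ‖x‖ < 1) (ha : HasSum (fun n ↦ a n * x ^ (n + m)) s)
    (ha_norm : Summable fun n ↦ ‖a n * x ^ (n + m)‖) :
    HasSum (fun n ↦ (∑ k ∈ range (n + 1), a k) * x ^ (n + m)) (s * (1 - x)⁻¹ʳ) := by
  have hgeom := hasSum_geom_series_inverse x hx
  have hprod := hasSum_sum_range_mul_of_summable_norm' ha_norm ha.summable
    (summable_norm_geometric_of_norm_lt_one hx) hgeom.summable
  rw [ha.tsum_eq, hgeom.tsum_eq] at hprod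
  refine hprod.congr_fun fun n ↦ ?_
  rw [sum_mul]
  refine sum_congr rfl fun k hk ↦ ?_
  have hkn : k + m + (n - k) = n + m := by grind
  rw [mul_assoc, ← pow_add, hkn]

theorem sum_Icc_one_eq_sum_range {M : Type*} [AddCommMonoid M] (f : ℕ → M) (n : ℕ) :
    ∑ k ∈ Icc 1 n, f k = ∑ k ∈ range n, f (k + 1) := by
  rw [range_eq_Ico, sum_Ico_add', zero_add, Ico_add_one_right_eq_Icc]

theorem geoharmonic_generating_function_general {r x : ℝ} (hx : |x| < 1) (hrx : |r * x| < 1) :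
    HasSum (fun n : ℕ ↦ (∑ k ∈ Icc 1 (n + 1), r ^ k / (k : ℝ)) * x ^ (n + 1))
      (Real.log (1 - r * x) / (x - 1)) := by
  have hlog : HasSum (fun n : ℕ ↦ r ^ (n + 1) / ((n + 1 : ℕ) : ℝ) * x ^ (n + 1))
      (-Real.log (1 - r * x)) := by
    simpa only [mul_pow, div_mul_eq_mul_div, Nat.cast_add_one] using
      Real.hasSum_pow_div_log_of_abs_lt_one hrx
  have hvalue : Real.log (1 - r * x) / (x - 1) = -Real.log (1 - r * x) * (1 - x)⁻¹ʳ := by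
    rw [Ring.inverse_eq_inv', ← div_eq_mul_inv, ← neg_sub 1 x, div_neg, neg_div]
  simpa only [sum_Icc_one_eq_sum_range, hvalue] using
    hasSum_sum_range_mul_pow_add hx hlog hlog.summable.norm

/-- With `Gₙ = Σ_{k=1}^{n} 2ᵏ/k` the 'geoharmonic' numbers, for every real `x` with
`|x| < 1/2` the series `Σ_{n=1}^{∞} Gₙ·xⁿ` converges with sum `ln(1−2x)/(x−1)`. -/
theorem geoharmonic_generating_function
    (G : ℕ → ℝ) (hG : ∀ n, G n = ∑ k ∈ Finset.Icc 1 n, (2 : ℝ) ^ k / (k : ℝ))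
    (x : ℝ) (hx : |x| < 1 / 2) :
    HasSum (fun n : ℕ => G (n + 1) * x ^ (n + 1)) (Real.log (1 - 2 * x) / (x - 1)) := by
  simpa only [hG] using geoharmonic_generating_function_general (r := 2) (x := x)
    (by linarith) (by rw [abs_mul, abs_two]; linarith)
end

section
/- With Gₙ = Σ_{k=1}^{n} 2ᵏ/k, for every real x the series Σ_{n=1}^{∞} (Gₙ/n!)·xⁿ converges and its sum equals eˣ·∫₀ˣ (eᵗ−e^{−t})/t dt = eˣ·Σ_{n=1}^{∞} (1+(−1)^{n+1})·xⁿ/(n·n!). -/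
open Finset MeasureTheory

/-!
Up to factorials, multiplying a series by `eˣ` is the binomial transform on its exponential
coefficients. Integrating the Taylor series of `(e^{at} - e^{bt}) / t` termwise gives the
coefficients `(aᵏ - bᵏ) / k`, whose binomial transform is `∑_{k ≤ n} ((1 + a)ᵏ - (1 + b)ᵏ) / k`:
its increment in `n` is an integrated binomial theorem (integrate `(1 + s)ⁿ` from `b` to `a`).
The geoharmonic numbers are the case `a = 1`, `b = -1`, where `1 + a = 2` and `1 + b = 0`.
-/

section BinomialTransform

variable {K : Type*} [Field K] [CharZero K]

theorem sum_range_choose_mul_pow_succ_div (a : K) (n : ℕ) :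
    ∑ k ∈ range (n + 1), n.choose k * (a ^ (k + 1) / (k + 1)) =
      ((1 + a) ^ (n + 1) - 1) / (n + 1) := by
  have absorb (k : ℕ) : (n.choose k : K) * (a ^ (k + 1) / (k + 1)) =
      a ^ (k + 1) * (n + 1).choose (k + 1) / (n + 1) := by
    have h : ((n : K) + 1) * n.choose k = (n + 1).choose (k + 1) * (k + 1) := by
      exact_mod_cast Nat.add_one_mul_choose_eq n k
    have hn : (n : K) + 1 ≠ 0 := n.cast_add_one_ne_zero
    have hk : (k : K) + 1 ≠ 0 := k.cast_add_one_ne_zero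
    rw [mul_div_assoc', div_eq_div_iff hk hn]
    linear_combination a ^ (k + 1) * h
  have binomial : (1 + a) ^ (n + 1) =
      ∑ k ∈ range (n + 1), a ^ (k + 1) * (n + 1).choose (k + 1) + 1 := by
    simp [add_comm 1 a, add_pow, sum_range_succ' _ (n + 1)]
  rw [sum_congr rfl fun k _ ↦ absorb k, ← sum_div, binomial, add_sub_cancel_right]

theorem sum_range_choose_succ_mul_pow_succ_div (a : K) (n : ℕ) :
    ∑ k ∈ range n, n.choose (k + 1) * (a ^ (k + 1) / (k + 1)) =
      ∑ k ∈ range n, ((1 + a) ^ (k + 1) - 1) / (k + 1) := by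
  induction n with
  | zero => simp
  | succ n ih =>
    calc ∑ k ∈ range (n + 1), (n + 1).choose (k + 1) * (a ^ (k + 1) / (k + 1))
        = ∑ k ∈ range (n + 1), n.choose k * (a ^ (k + 1) / (k + 1)) +
            ∑ k ∈ range (n + 1), n.choose (k + 1) * (a ^ (k + 1) / (k + 1)) := by
          simp only [Nat.choose_succ_succ', Nat.cast_add, add_mul, sum_add_distrib]
      _ = ((1 + a) ^ (n + 1) - 1) / (n + 1) +
            ∑ k ∈ range n, ((1 + a) ^ (k + 1) - 1) / (k + 1) := by
          rw [sum_range_choose_mul_pow_succ_div, sum_range_succ, ih]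
          simp
      _ = ∑ k ∈ range (n + 1), ((1 + a) ^ (k + 1) - 1) / (k + 1) := by
          rw [sum_range_succ, add_comm]

theorem sum_range_choose_succ_mul_pow_sub_pow_div (a b : K) (n : ℕ) :
    ∑ k ∈ range n, n.choose (k + 1) * ((a ^ (k + 1) - b ^ (k + 1)) / (k + 1)) =
      ∑ k ∈ range n, ((1 + a) ^ (k + 1) - (1 + b) ^ (k + 1)) / (k + 1) := by
  simp only [sub_div, mul_sub, sum_sub_distrib, sum_range_choose_succ_mul_pow_succ_div]
  ring

end BinomialTransform

theorem hasSum_binomial_convolution {𝕜 : Type*} [NormedField 𝕜] [CharZero 𝕜]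
    {a b : ℕ → 𝕜} {x A B : 𝕜}
    (ha : HasSum (fun n ↦ a n / n.factorial * x ^ n) A)
    (ha' : Summable fun n ↦ ‖a n / n.factorial * x ^ n‖)
    (hb : HasSum (fun n ↦ b n / n.factorial * x ^ n) B)
    (hb' : Summable fun n ↦ ‖b n / n.factorial * x ^ n‖) :
    HasSum (fun n ↦ (∑ k ∈ range (n + 1), n.choose k * (a k * b (n - k))) / n.factorial * x ^ n)
      (A * B) := by
  have cauchy := hasSum_sum_range_mul_of_summable_norm' ha' ha.summable hb' hb.summable
  rw [ha.tsum_eq, hb.tsum_eq] at cauchy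
  refine cauchy.congr_fun fun n ↦ ?_
  rw [sum_div, sum_mul]
  refine sum_congr rfl fun k hk ↦ ?_
  obtain ⟨m, rfl⟩ := Nat.exists_eq_add_of_le (mem_range_succ_iff.1 hk)
  have : ((k + m).factorial : 𝕜) ≠ 0 := Nat.cast_ne_zero.2 (Nat.factorial_ne_zero _)
  rw [Nat.cast_add_choose, Nat.add_sub_cancel_left]
  field_simp
  ring

theorem hasSum_integral_of_hasSum_pow_smul {E : Type*} [NormedAddCommGroup E]
    [NormedSpace ℝ E] [CompleteSpace E] {c : ℕ → E} {f : ℝ → E} {x : ℝ}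
    (hc : Summable fun n ↦ |x| ^ n * ‖c n‖)
    (hf : ∀ᵐ t, t ∈ Set.uIoc 0 x → HasSum (fun n ↦ t ^ n • c n) (f t)) :
    HasSum (fun n : ℕ ↦ (x ^ (n + 1) / (n + 1)) • c n) (∫ t in 0..x, f t) := by
  have bound (n : ℕ) {t : ℝ} (ht : t ∈ Set.uIoc 0 x) : ‖t ^ n • c n‖ ≤ |x| ^ n * ‖c n‖ := by
    have : |t| ≤ |x| := by
      simpa using Set.abs_sub_left_of_mem_uIcc (Set.uIoc_subset_uIcc ht)
    rw [norm_smul, norm_pow, Real.norm_eq_abs]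
    gcongr
  have key : HasSum (fun n ↦ ∫ t in 0..x, t ^ n • c n) (∫ t in 0..x, f t) :=
    intervalIntegral.hasSum_integral_of_dominated_convergence
      (fun n _ ↦ |x| ^ n * ‖c n‖)
      (fun n ↦ Continuous.aestronglyMeasurable (by fun_prop))
      (fun n ↦ .of_forall fun _ ↦ bound n) (.of_forall fun _ _ ↦ hc)
      intervalIntegrable_const hf
  simpa [intervalIntegral.integral_smul_const] using key

theorem hasSum_pow_div_factorial_exp (x : ℝ) :
    HasSum (fun n : ℕ ↦ x ^ n / n.factorial) (Real.exp x) := by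
  simpa [Real.exp_eq_exp_ℝ] using NormedSpace.expSeries_div_hasSum_exp x

theorem hasSum_exp_mul_sub_exp_mul_div (a b : ℝ) {t : ℝ} (ht : t ≠ 0) :
    HasSum (fun n : ℕ ↦ t ^ n * ((a ^ (n + 1) - b ^ (n + 1)) / (n + 1).factorial))
      ((Real.exp (a * t) - Real.exp (b * t)) / t) := by
  have taylor := (hasSum_pow_div_factorial_exp (a * t)).sub (hasSum_pow_div_factorial_exp (b * t))
  rw [← hasSum_nat_add_iff' 1] at taylor
  convert! taylor.div_const t using 2 with n
  · field_simp
    ring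
  · simp

theorem hasSum_integral_exp_mul_sub_exp_mul_div (a b x : ℝ) :
    HasSum (fun n : ℕ ↦ (a ^ (n + 1) - b ^ (n + 1)) / (n + 1) / (n + 1).factorial * x ^ (n + 1))
      (∫ t in 0..x, (Real.exp (a * t) - Real.exp (b * t)) / t) := by
  obtain rfl | hx := eq_or_ne x 0
  · simp [hasSum_zero]
  have summable : Summable fun n : ℕ ↦
      |x| ^ n * ‖(a ^ (n + 1) - b ^ (n + 1)) / (n + 1).factorial‖ := by
    simpa [abs_mul] using (hasSum_exp_mul_sub_exp_mul_div a b hx).summable.norm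
  have ae_expansion : ∀ᵐ t : ℝ, t ∈ Set.uIoc 0 x → HasSum _ _ :=
    (Measure.ae_ne volume 0).mono fun t ht _ ↦ hasSum_exp_mul_sub_exp_mul_div a b ht
  convert! hasSum_integral_of_hasSum_pow_smul summable ae_expansion using 2 with n
  rw [smul_eq_mul]
  ring

theorem hasSum_exp_mul_integral_exp_mul_sub_exp_mul_div (a b x : ℝ) :
    HasSum
      (fun n : ℕ ↦ (∑ k ∈ range (n + 1), ((1 + a) ^ (k + 1) - (1 + b) ^ (k + 1)) / (k + 1)) /
        (n + 1).factorial * x ^ (n + 1))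
      (Real.exp x * ∫ t in 0..x, (Real.exp (a * t) - Real.exp (b * t)) / t) := by
  -- The `n = 0` coefficient is `0 / 0 = 0`, so prepending it does not change the sum.
  have integral_series : HasSum (fun n : ℕ ↦ (a ^ n - b ^ n) / n / n.factorial * x ^ n)
      (∫ t in 0..x, (Real.exp (a * t) - Real.exp (b * t)) / t) := by
    rw [← hasSum_nat_add_iff' 1]
    simpa using hasSum_integral_exp_mul_sub_exp_mul_div a b x
  have exp_series : HasSum (fun n : ℕ ↦ 1 / n.factorial * x ^ n) (Real.exp x) := by
    simpa [div_eq_inv_mul] using hasSum_pow_div_factorial_exp x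
  have product := hasSum_binomial_convolution integral_series integral_series.summable.norm
    exp_series exp_series.summable.norm
  rw [← hasSum_nat_add_iff' 1, mul_comm] at product
  have transform (n : ℕ) :
      ∑ k ∈ range (n + 1 + 1), (n + 1).choose k * ((a ^ k - b ^ k) / k) =
        ∑ k ∈ range (n + 1), ((1 + a) ^ (k + 1) - (1 + b) ^ (k + 1)) / (k + 1) := by
    simp [sum_range_succ' _ (n + 1), ← sum_range_choose_succ_mul_pow_sub_pow_div]
  simpa [transform] using product

/-- With `Gₙ = Σ_{k=1}^{n} 2ᵏ/k` the 'geoharmonic' numbers, for every real `x` the series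
`Σ_{n=1}^{∞} (Gₙ/n!)·xⁿ` converges with sum `eˣ·∫₀ˣ (eᵗ−e^{−t})/t dt`, which also equals
`eˣ·Σ_{n=1}^{∞} (1+(−1)^{n+1})·xⁿ/(n·n!)`. -/
theorem geoharmonic_exponential_generating_function
    (G : ℕ → ℝ) (hG : ∀ n, G n = ∑ k ∈ Finset.Icc 1 n, (2 : ℝ) ^ k / (k : ℝ))
    (x : ℝ) :
    HasSum (fun n : ℕ => G (n + 1) / (Nat.factorial (n + 1) : ℝ) * x ^ (n + 1))
      (Real.exp x * ∫ t in (0 : ℝ)..x, (Real.exp t - Real.exp (-t)) / t) ∧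
    HasSum
      (fun n : ℕ => Real.exp x *
        ((1 + (-1 : ℝ) ^ (n + 1 + 1)) * x ^ (n + 1) /
          (((n : ℝ) + 1) * (Nat.factorial (n + 1) : ℝ))))
      (Real.exp x * ∫ t in (0 : ℝ)..x, (Real.exp t - Real.exp (-t)) / t) := by
  constructor
  · have hG' (n : ℕ) : G n =
        ∑ k ∈ range n, ((1 + 1 : ℝ) ^ (k + 1) - (1 + -1) ^ (k + 1)) / (k + 1) := by
      rw [hG, ← Ico_add_one_right_eq_Icc, sum_Ico_eq_sum_range]
      norm_num [add_comm]
    simpa [hG'] using hasSum_exp_mul_integral_exp_mul_sub_exp_mul_div 1 (-1) x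
  · have series := hasSum_integral_exp_mul_sub_exp_mul_div 1 (-1) x
    simp only [one_mul, neg_one_mul] at series
    convert! series.mul_left (Real.exp x) using 2 with n
    field_simp
    ring
end
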